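/- Let 0 < α < |a|. Then there exist continuous real-valued functions A₀, B₀ on the open interval (−|a|, |a|) (depending only on A and φ) and a constant C > 0 such that for every positive integer n and every integer y with |y/n| ≤ α, writing ξₙ = y/n, one has p_n(φ; y) = ((1 + (−1)^{n+y})|b| / (π n (1 − ξₙ²) √(|a|² − ξₙ²))) · (1 + λ_A(φ) ξₙ + A₀(ξₙ) cos(n θ(ξₙ)) + B₀(ξₙ) sin(n θ(ξₙ)) + Eₙ(y)) where |Eₙ(y)| ≤ C/n uniformly over such y. -/

import Mathlib

/-!
Write `c = |a|`, `s = |b|` and `μ(t) = arccos (c cos t)`. By induction on `n`, the iterates of the walk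
are expressed through the Fourier coefficients `K`, `V`, `W` of the kernels `cos (n μ) cos (y t)`,
`(sin (n μ) / sin μ) c sin t sin (y t)` and `(sin (n μ) / sin μ) cos (y t)` (`qw_iterate`).
A partial integration gives `V = ξ K` with `ξ = y / n` (`avg_V`), and `W` at `y ∓ 1` equals
`M ± ξ K / c`, where `M` is the coefficient of `(sin (n μ) / sin μ) cos t cos (y t)`. Hence the
transition probability is an explicit quadratic form in the two numbers `K` and `M` alone
(`qwP_formula`). The translation `t ↦ t + π` multiplies both kernels by `(-1)^(n+y)`, which yields
the parity factor and reduces everything to integrals over `[-π/2, π/2]` (`avg_K_eq`, `avg_M_eq`),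
where the phase `n (μ(t) - ξ t)` has the single stationary point `t₀ = t(ξ)`.

The claimed relative error `O(1/n)` is one power of `√n` better than plain stationary phase gives,
so the terms of order `1/n` in the integrals have to be followed. The method of stationary phase is
carried out with error `O(n^(-3/2))` on each side of `t₀`, uniformly for `t₀` in a compact interval
(`half_stationary`, `uniform_half`). The `1/n` terms at `t₀` of the two sides cancel (`two_sided`).
The endpoint terms at `±π/2` do not contribute either: for `K` they are purely imaginary because
`n + y` is even, and for `M` the amplitude vanishes there (`KM_asymp`).

With `β = n θ(ξ) / 2 + π / 4`, the main terms of `K` and `M` are, up to the common factor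
`√(2 s / (π n (1 - ξ²) √(c² - ξ²)))`, equal to `cos β` and `(√(c² - ξ²) / (c s)) sin β`.
Inserting them in the quadratic form and using `sin (n θ) = 1 - 2 cos² β`, `cos (n θ) = 2 sin β cos β`
gives the result with `B₀(ξ) = -(ξ² / c² + λ ξ)` and `A₀(ξ) = √(c² - ξ²) J ξ / (2 c s)`, where `J` is
the constant such that `J ξ` is the coefficient of `K M`.
-/

open Filter Topology Asymptotics MeasureTheory

noncomputable section

/-- One step of the (column-decomposition) quantum walk `U` on functions `ℤ → ℂ²`:
`(Uf)(x) = P f(x+1) + Q f(x-1)` with `P = [[a,0],[-conj b,0]]`, `Q = [[0,b],[0,conj a]]`. -/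
def qwStep (a b : ℂ) (f : ℤ → ℂ × ℂ) : ℤ → ℂ × ℂ := fun x =>
  (a * (f (x + 1)).1 + b * (f (x - 1)).2,
   -(starRingEnd ℂ) b * (f (x + 1)).1 + (starRingEnd ℂ) a * (f (x - 1)).2)

/-- `δ₀ ⊗ φ : ℤ → ℂ²`. -/
def qwDelta (φ : ℂ × ℂ) : ℤ → ℂ × ℂ := fun x => if x = 0 then φ else 0

/-- Squared norm of a vector in `ℂ²`. -/
def nsq (u : ℂ × ℂ) : ℝ := ‖u.1‖ ^ 2 + ‖u.2‖ ^ 2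

/-- Transition probability `p_n(φ; y) = ‖(Uⁿ(δ₀ ⊗ φ))(y)‖²`. -/
def qwP (a b : ℂ) (φ : ℂ × ℂ) (n : ℕ) (y : ℤ) : ℝ :=
  nsq (((qwStep a b)^[n] (qwDelta φ)) y)

/-- `λ_A(φ) = |φ₂|² − |φ₁|² + (1/|a|²)(ab conj(φ₁)φ₂ + conj(ab) φ₁ conj(φ₂))` (a real number). -/
def lamA (a b : ℂ) (φ : ℂ × ℂ) : ℝ :=
  ‖φ.2‖ ^ 2 - ‖φ.1‖ ^ 2 +
    (a * b * (starRingEnd ℂ) φ.1 * φ.2 +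
      (starRingEnd ℂ) a * (starRingEnd ℂ) b * φ.1 * (starRingEnd ℂ) φ.2).re / ‖a‖ ^ 2

/-- `μ(t) = arccos(|a| cos t)`. -/
def muF (a : ℂ) (t : ℝ) : ℝ := Real.arccos (‖a‖ * Real.cos t)

/-- `t(η) = arcsin(|b|η/(|a|√(1 − η²)))`. -/
def tF (a b : ℂ) (η : ℝ) : ℝ := Real.arcsin (‖b‖ * η / (‖a‖ * Real.sqrt (1 - η ^ 2)))

/-- `θ(η) = 2μ(t(η)) − 2η t(η)`. -/
def thetaF (a b : ℂ) (η : ℝ) : ℝ := 2 * muF a (tF a b η) - 2 * η * tF a b η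

/-! ### Truncated Fresnel integrals -/

/-- Two-term asymptotic antiderivative of `exp (-b x²)` near infinity; the error in its derivative
is of relative size `x⁻⁴`. -/
def gaussTail (b : ℂ) (x : ℝ) : ℂ :=
  -(Complex.exp (-b * (x : ℂ) ^ 2) / (2 * b * x)) + Complex.exp (-b * (x : ℂ) ^ 2) / (4 * b ^ 2 * (x : ℂ) ^ 3)

lemma hasDerivAt_gaussTail (b : ℂ) (hb : b ≠ 0) (x : ℝ) (hx : x ≠ 0) :
    HasDerivAt (gaussTail b) (Complex.exp (-b * (x : ℂ) ^ 2)
      - 3 * Complex.exp (-b * (x : ℂ) ^ 2) / (4 * b ^ 2 * (x : ℂ) ^ 4)) x := by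
  have hx' : (x : ℂ) ≠ 0 := by exact_mod_cast hx
  have hid : HasDerivAt (fun x : ℝ => (x : ℂ)) 1 x := Complex.ofRealCLM.hasDerivAt
  have he : HasDerivAt (fun x : ℝ => Complex.exp (-b * (x : ℂ) ^ 2))
      (Complex.exp (-b * (x : ℂ) ^ 2) * (-b * (2 * x))) x := by
    exact (((hid.pow 2).const_mul (-b))).cexp.congr_deriv (by simp)
  have h1 := he.div (hid.const_mul (2 * b)) (by simp [hb, hx'])
  have h2 := he.div ((hid.pow 3).const_mul (4 * b ^ 2)) (by simp [hb, hx'])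
  refine (h1.neg.add h2).congr_deriv ?_
  simp only [Pi.pow_apply]
  field_simp
  ring

/-- The difference `∫₀ˣ exp (-b t²) dt - gaussTail b x` is Cauchy as `x → ∞`, with an explicit rate
that stays uniform as `b` approaches the imaginary axis. -/
lemma gauss_tail_bound (b : ℂ) (hb : b ≠ 0) (hre : 0 ≤ b.re) (X Y : ℝ) (hX : 0 < X) (hXY : X ≤ Y) :
    ‖((∫ x in (0:ℝ)..Y, Complex.exp (-b * (x : ℂ) ^ 2)) - gaussTail b Y) -
      ((∫ x in (0:ℝ)..X, Complex.exp (-b * (x : ℂ) ^ 2)) - gaussTail b X)‖ ≤ 1 / (4 * ‖b‖ ^ 2 * X ^ 3) := by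
  have hcont : Continuous (fun x : ℝ => Complex.exp (-b * (x : ℂ) ^ 2)) := by fun_prop
  have hpos : ∀ x ∈ Set.uIcc X Y, 0 < x := by
    intro x hx
    rw [Set.uIcc_of_le hXY] at hx
    linarith [hx.1]
  have hd : ∀ x ∈ Set.uIcc X Y, HasDerivAt (fun Y => (∫ x in (0:ℝ)..Y, Complex.exp (-b * (x : ℂ) ^ 2)) - gaussTail b Y)
      (3 * Complex.exp (-b * (x : ℂ) ^ 2) / (4 * b ^ 2 * (x : ℂ) ^ 4)) x := by
    intro x hx
    have h1 := intervalIntegral.integral_hasDerivAt_right (hcont.intervalIntegrable 0 x)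
      hcont.stronglyMeasurable.stronglyMeasurableAtFilter hcont.continuousAt
    exact (h1.sub (hasDerivAt_gaussTail b hb x (hpos x hx).ne')).congr_deriv (by ring)
  have hci : ContinuousOn (fun x : ℝ => 3 * Complex.exp (-b * (x : ℂ) ^ 2) / (4 * b ^ 2 * (x : ℂ) ^ 4)) (Set.uIcc X Y) := by
    apply ContinuousOn.div (by fun_prop) (by fun_prop)
    intro x hx
    have : (x : ℂ) ≠ 0 := by exact_mod_cast (hpos x hx).ne'
    simp [hb, this]
  have hInteg := intervalIntegral.integral_eq_sub_of_hasDerivAt hd hci.intervalIntegrable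
  rw [← hInteg]
  have hd2 : ∀ x ∈ Set.uIcc X Y, HasDerivAt (fun x : ℝ => -(1 / (4 * ‖b‖ ^ 2)) * (x ^ 3)⁻¹)
      (3 / (4 * ‖b‖ ^ 2 * x ^ 4)) x := by
    intro x hx
    have hx0 := (hpos x hx).ne'
    have hb0 : ‖b‖ ≠ 0 := by simpa using hb
    have := ((hasDerivAt_pow 3 x).inv (by positivity)).const_mul (-(1 / (4 * ‖b‖ ^ 2)))
    refine this.congr_deriv ?_
    simp only [Nat.cast_ofNat, Nat.add_one_sub_one]
    field_simp
  have hci2 : IntervalIntegrable (fun x : ℝ => (3 / (4 * ‖b‖ ^ 2 * x ^ 4))) volume X Y := by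
    apply ContinuousOn.intervalIntegrable
    apply ContinuousOn.div (by fun_prop) (by fun_prop)
    intro x hx
    have := (hpos x hx)
    have hb0 : ‖b‖ ≠ 0 := by simpa using hb
    positivity
  refine (intervalIntegral.norm_integral_le_of_norm_le hXY ?_ hci2).trans ?_
  · refine Eventually.of_forall fun x hx => ?_
    have hx0 : 0 < x := by linarith [hx.1]
    have hn : ‖Complex.exp (-b * (x : ℂ) ^ 2)‖ ≤ 1 := by
      rw [Complex.norm_exp, Real.exp_le_one_iff]
      have : (-b * (x : ℂ) ^ 2).re = -(b.re * x ^ 2) := by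
        rw [← Complex.ofReal_pow, Complex.re_mul_ofReal]; simp
      rw [this]
      have := mul_nonneg hre (sq_nonneg x)
      linarith
    rw [norm_div, norm_mul, norm_mul, norm_mul, norm_pow, norm_pow, Complex.norm_real, Real.norm_of_nonneg hx0.le]
    simp only [Complex.norm_ofNat]
    gcongr
    linarith
  · rw [intervalIntegral.integral_eq_sub_of_hasDerivAt hd2 hci2]
    have hY : 0 < Y := by linarith
    have : 0 ≤ 1 / (4 * ‖b‖ ^ 2) * (Y ^ 3)⁻¹ := by positivity
    have e : 1 / (4 * ‖b‖ ^ 2 * X ^ 3) = 1 / (4 * ‖b‖ ^ 2) * (X ^ 3)⁻¹ := by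
      rw [one_div_mul_eq_div, one_div, mul_inv]; ring
    rw [e]; linarith

lemma gaussTail_tendsto (b : ℂ) (hb : b ≠ 0) (hre : 0 ≤ b.re) :
    Tendsto (gaussTail b) atTop (𝓝 0) := by
  have hn : ∀ x : ℝ, ‖Complex.exp (-b * (x : ℂ) ^ 2)‖ ≤ 1 := by
    intro x
    rw [Complex.norm_exp, Real.exp_le_one_iff]
    have : (-b * (x : ℂ) ^ 2).re = -(b.re * x ^ 2) := by
      rw [← Complex.ofReal_pow, Complex.re_mul_ofReal]; simp
    rw [this]
    have := mul_nonneg hre (sq_nonneg x)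
    linarith
  have hb0 : 0 < ‖b‖ := by simpa using hb
  have hlim : Tendsto (fun x : ℝ => (1 / (2 * ‖b‖)) * x⁻¹ + (1 / (4 * ‖b‖ ^ 2)) * (x⁻¹) ^ 3) atTop (𝓝 0) := by
    have := (tendsto_inv_atTop_zero (𝕜 := ℝ)).const_mul (1 / (2 * ‖b‖))
    have h2 := ((tendsto_inv_atTop_zero (𝕜 := ℝ)).pow 3).const_mul (1 / (4 * ‖b‖ ^ 2))
    simpa using this.add h2
  refine squeeze_zero_norm' ?_ hlim
  filter_upwards [eventually_gt_atTop 0] with x hx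
  unfold gaussTail
  refine (norm_add_le _ _).trans ?_
  rw [norm_neg, norm_div, norm_div, norm_mul, norm_mul, norm_mul, norm_mul, norm_pow, norm_pow, Complex.norm_real, Real.norm_of_nonneg hx.le]
  simp only [Complex.norm_ofNat]
  have := hn x
  have e1 : 1 / (2 * ‖b‖) * x⁻¹ = 1 / (2 * ‖b‖ * x) := by field_simp
  have e2 : 1 / (4 * ‖b‖ ^ 2) * (x⁻¹) ^ 3 = 1 / (4 * ‖b‖ ^ 2 * x ^ 3) := by field_simp
  rw [e1, e2]
  gcongr

/-- Truncated Gaussian integral: for `Re b > 0` the limit of the differences in `gauss_tail_bound`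
is half of the full Gaussian integral. -/
lemma gauss_trunc_of_re_pos (b : ℂ) (hre : 0 < b.re) (X : ℝ) (hX : 0 < X) :
    ‖((Real.pi / b : ℂ) ^ (1 / 2 : ℂ) / 2) -
      ((∫ x in (0:ℝ)..X, Complex.exp (-b * (x : ℂ) ^ 2)) - gaussTail b X)‖ ≤ 1 / (4 * ‖b‖ ^ 2 * X ^ 3) := by
  have hb : b ≠ 0 := by rintro rfl; simp at hre
  have h1 := intervalIntegral_tendsto_integral_Ioi 0
    ((integrable_cexp_neg_mul_sq hre).integrableOn) (tendsto_id (α := ℝ) (x := atTop))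
  rw [integral_gaussian_complex_Ioi hre] at h1
  have h2 := h1.sub (gaussTail_tendsto b hb hre.le)
  have h3 := (h2.sub_const ((∫ x in (0:ℝ)..X, Complex.exp (-b * (x : ℂ) ^ 2)) - gaussTail b X)).norm
  rw [sub_zero] at h3
  refine le_of_tendsto h3 ?_
  filter_upwards [eventually_ge_atTop X] with Y hY
  exact gauss_tail_bound b hb hre.le X Y hX hY

/-- Truncated Fresnel integral with its boundary term. -/
lemma fresnel_trunc (n X : ℝ) (hn : 0 < n) (hX : 0 < X) :
    ‖(∫ x in (0:ℝ)..X, Complex.exp (Complex.I * (n * (x ^ 2 / 2) : ℝ))) -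
      (Real.sqrt (2 * Real.pi / n) / 2 * Complex.exp (Complex.I * (Real.pi / 4 : ℝ))
        + Complex.exp (Complex.I * (n * (X ^ 2 / 2) : ℝ)) / (Complex.I * n * X))‖ ≤ 2 / (n ^ 2 * X ^ 3) := by
  set b : ℂ := -(Complex.I * (n / 2 : ℝ)) with hbdef
  have hnb : ‖b‖ = n / 2 := by
    rw [hbdef, norm_neg, norm_mul, Complex.norm_I, Complex.norm_real, Real.norm_of_nonneg (by positivity), one_mul]
  have hb : b ≠ 0 := by rw [← norm_ne_zero_iff, hnb]; positivity
  have hn' : (n : ℂ) ≠ 0 := by exact_mod_cast hn.ne'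
  have hpib : (Real.pi / b : ℂ) = Complex.I * (2 * Real.pi / n : ℝ) := by
    rw [hbdef, div_eq_iff (by simpa [hbdef] using hb)]
    push_cast
    field_simp
    rw [Complex.I_sq]; ring
  -- let the damping tend to zero in `gauss_trunc_of_re_pos`
  have key : ‖((Real.pi / b : ℂ) ^ (1 / 2 : ℂ) / 2) -
      ((∫ x in (0:ℝ)..X, Complex.exp (-b * (x : ℂ) ^ 2)) - gaussTail b X)‖ ≤ 1 / (4 * ‖b‖ ^ 2 * X ^ 3) := by
    have hB : Tendsto (fun ε : ℝ => b + ε) (𝓝[>] 0) (𝓝 b) := by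
      have : ContinuousAt (fun ε : ℝ => b + ε) 0 := by fun_prop
      have h := this.tendsto
      simp only [Complex.ofReal_zero, add_zero] at h
      exact h.mono_left nhdsWithin_le_nhds
    have hc1 : ContinuousAt (fun b : ℂ => (Real.pi / b : ℂ) ^ (1 / 2 : ℂ) / 2) b := by
      have : ContinuousAt (fun b : ℂ => (Real.pi / b : ℂ)) b := continuousAt_const.div continuousAt_id hb
      refine (this.cpow continuousAt_const ?_).div_const 2
      rw [hpib]
      right
      rw [Complex.im_mul_ofReal]
      simp [hn.ne', Real.pi_ne_zero]
    have hc2 : Continuous (fun b : ℂ => ∫ x in (0:ℝ)..X, Complex.exp (-b * (x : ℂ) ^ 2)) := by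
      apply intervalIntegral.continuous_parametric_intervalIntegral_of_continuous'
      unfold Function.uncurry; fun_prop
    have hX' : (X : ℂ) ≠ 0 := by exact_mod_cast hX.ne'
    have hc3 : ContinuousAt (fun b : ℂ => gaussTail b X) b := by
      unfold gaussTail
      refine ContinuousAt.add (ContinuousAt.neg (ContinuousAt.div ?_ ?_ ?_)) (ContinuousAt.div ?_ ?_ ?_)
      · fun_prop
      · fun_prop
      · simp [hb, hX']
      · fun_prop
      · fun_prop
      · simp [hb, hX']
    have hc4 : ContinuousAt (fun b : ℂ => 1 / (4 * ‖b‖ ^ 2 * X ^ 3)) b := by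
      refine ContinuousAt.div continuousAt_const (by fun_prop) ?_
      have : 0 < ‖b‖ := by simpa using hb
      positivity
    refine le_of_tendsto_of_tendsto (((hc1.sub (hc2.continuousAt.sub hc3)).norm).tendsto.comp hB) (hc4.tendsto.comp hB) ?_
    filter_upwards [self_mem_nhdsWithin] with ε hε
    refine gauss_trunc_of_re_pos (b + ε) ?_ X hX
    have : b.re = 0 := by simp [hbdef]
    simp only [Complex.add_re, this, Complex.ofReal_re, zero_add]
    exact hε
  have hsq : (Real.pi / b : ℂ) ^ (1 / 2 : ℂ) = Real.sqrt (2 * Real.pi / n) * Complex.exp (Complex.I * (Real.pi / 4 : ℝ)) := by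
    rw [hpib]
    have hr : (0:ℝ) ≤ 2 * Real.pi / n := by positivity
    have hr' : (2 * Real.pi / n : ℝ) ≠ 0 := by positivity
    have hr'' : ((2 * Real.pi / n : ℝ) : ℂ) ≠ 0 := by exact_mod_cast hr'
    rw [mul_comm, Complex.cpow_def_of_ne_zero (mul_ne_zero hr'' Complex.I_ne_zero),
      Complex.log_ofReal_mul (by positivity) Complex.I_ne_zero, Complex.log_I, Real.sqrt_eq_rpow,
      Real.rpow_def_of_pos (by positivity), Complex.ofReal_exp, ← Complex.exp_add]
    congr 1; push_cast; ring
  have hexp : ∀ x : ℝ, Complex.exp (-b * (x : ℂ) ^ 2) = Complex.exp (Complex.I * (n * (x ^ 2 / 2) : ℝ)) := by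
    intro x; congr 1; rw [hbdef]; push_cast; ring
  rw [hsq] at key
  unfold gaussTail at key
  simp only [hexp] at key
  have hX' : (X : ℂ) ≠ 0 := by exact_mod_cast hX.ne'
  set J := ∫ x in (0:ℝ)..X, Complex.exp (Complex.I * (n * (x ^ 2 / 2) : ℝ))
  set S : ℂ := Real.sqrt (2 * Real.pi / n) * Complex.exp (Complex.I * (Real.pi / 4 : ℝ)) with hS
  set e : ℂ := Complex.exp (Complex.I * (n * (X ^ 2 / 2) : ℝ)) with he
  have hen : ‖e‖ = 1 := by rw [he, mul_comm]; exact Complex.norm_exp_ofReal_mul_I _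
  have hsplit : J - (Real.sqrt (2 * Real.pi / n) / 2 * Complex.exp (Complex.I * (Real.pi / 4 : ℝ)) + e / (Complex.I * n * X))
      = -(S / 2 - (J - (-(e / (2 * b * X)) + e / (4 * b ^ 2 * (X : ℂ) ^ 3)))) + e / (4 * b ^ 2 * (X : ℂ) ^ 3) := by
    have : e / (Complex.I * n * X) = -(e / (2 * b * X)) := by
      rw [hbdef, ← div_neg]; congr 1; push_cast; ring
    rw [this, hS]; ring
  rw [hsplit]
  refine (norm_add_le _ _).trans ?_
  rw [norm_neg]
  have h2 : ‖e / (4 * b ^ 2 * (X : ℂ) ^ 3)‖ = 1 / (4 * ‖b‖ ^ 2 * X ^ 3) := by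
    rw [norm_div, hen, norm_mul, norm_mul, norm_pow, norm_pow, Complex.norm_real, Real.norm_of_nonneg hX.le]
    simp
  rw [h2]
  refine (add_le_add_left key _).trans ?_
  rw [hnb]
  apply le_of_eq
  field_simp
  norm_num

/-! ### One-sided stationary phase -/

lemma intervalIntegrable_of_bdd_Ioc {f : ℝ → ℂ} {R C : ℝ} (hR : 0 ≤ R)
    (hf : ContinuousOn f (Set.Ioc 0 R)) (hb : ∀ x ∈ Set.Ioc 0 R, ‖f x‖ ≤ C) :
    IntervalIntegrable f volume 0 R := by
  rw [intervalIntegrable_iff_integrableOn_Ioc_of_le hR]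
  refine Integrable.of_bound (hf.aestronglyMeasurable measurableSet_Ioc) C ?_
  filter_upwards [ae_restrict_mem measurableSet_Ioc] with x hx using hb x hx

lemma norm_osc (n F : ℝ) : ‖Complex.exp (Complex.I * (n * F : ℝ))‖ = 1 := by
  rw [mul_comm]; exact Complex.norm_exp_ofReal_mul_I _

lemma hasDerivAt_osc {F : ℝ → ℝ} {F' x : ℝ} (n : ℝ) (h : HasDerivAt F F' x) :
    HasDerivAt (fun x => Complex.exp (Complex.I * (n * F x : ℝ)))
      (Complex.exp (Complex.I * (n * F x : ℝ)) * (Complex.I * n * F')) x := by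
  refine (((h.const_mul n).ofReal_comp).const_mul Complex.I).cexp.congr_deriv ?_
  push_cast; ring

/-- A bound of van der Corput type, `O(n^(-1/2))`, for a phase with derivative `x q(x)`. The amplitude
`K` is bounded but its derivative may blow up like `1 / x`. The integral is split at `x = 1 / √n`;
the first piece is estimated trivially and the second one by a partial integration. -/
lemma vdc_bound {n R R0 m B B0 : ℝ} {F q q1 K K1 : ℝ → ℝ} (hn : 0 < n) (hR : 0 < R) (hR0 : R ≤ R0)
    (hm : 0 < m) (hB : 0 ≤ B) (hB0 : 0 ≤ B0)
    (hF : ∀ x ∈ Set.Icc 0 R, HasDerivAt F (x * q x) x)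
    (hq : ∀ x ∈ Set.Icc 0 R, HasDerivAt q (q1 x) x)
    (hqm : ∀ x ∈ Set.Icc 0 R, m ≤ q x) (hq1 : ∀ x ∈ Set.Icc 0 R, |q1 x| ≤ B)
    (hq1c : ContinuousOn q1 (Set.Icc 0 R))
    (hK : ∀ x ∈ Set.Ioc 0 R, HasDerivAt K (K1 x) x) (hKb : ∀ x ∈ Set.Ioc 0 R, |K x| ≤ B0)
    (hK1c : ContinuousOn K1 (Set.Ioc 0 R))
    (hK1 : ∀ x ∈ Set.Ioc 0 R, |K1 x| ≤ 3 * B0 / x) :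
    ‖∫ x in (0:ℝ)..R, Complex.exp (Complex.I * (n * F x : ℝ)) * (K x : ℂ)‖
      ≤ (B0 + 2 * B0 / m + (4 * B0 / m + B0 * B * R0 / m ^ 2)) / Real.sqrt n := by
  have hs : 0 < Real.sqrt n := Real.sqrt_pos.2 hn
  set Cb := 4 * B0 / m + B0 * B * R0 / m ^ 2 with hCb
  have hR0' : 0 < R0 := by linarith
  have hCb0 : 0 ≤ Cb := by positivity
  have hFc : ContinuousOn F (Set.Icc 0 R) := fun x hx => (hF x hx).continuousAt.continuousWithinAt
  have hqc : ContinuousOn q (Set.Icc 0 R) := fun x hx => (hq x hx).continuousAt.continuousWithinAt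
  have hKc : ContinuousOn K (Set.Ioc 0 R) := fun x hx => (hK x hx).continuousAt.continuousWithinAt
  have hec : ContinuousOn (fun x => Complex.exp (Complex.I * (n * F x : ℝ))) (Set.Icc 0 R) := by fun_prop
  have hfc : ContinuousOn (fun x => Complex.exp (Complex.I * (n * F x : ℝ)) * (K x : ℂ)) (Set.Ioc 0 R) :=
    (hec.mono Set.Ioc_subset_Icc_self).mul (by fun_prop)
  have hfb : ∀ x ∈ Set.Ioc 0 R, ‖Complex.exp (Complex.I * (n * F x : ℝ)) * (K x : ℂ)‖ ≤ B0 := by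
    intro x hx
    rw [norm_mul, norm_osc, one_mul, Complex.norm_real]; exact hKb x hx
  have hInteg := intervalIntegrable_of_bdd_Ioc hR.le hfc hfb
  set ε := 1 / Real.sqrt n with hε
  have hε0 : 0 < ε := by positivity
  have hnε : n * ε = Real.sqrt n := by
    rw [hε, mul_one_div, div_eq_iff hs.ne', Real.mul_self_sqrt hn.le]
  by_cases hcase : R ≤ ε
  · refine (intervalIntegral.norm_integral_le_of_norm_le_const (C := B0) ?_).trans ?_
    · intro x hx
      rw [Set.uIoc_of_le hR.le] at hx
      exact hfb x hx
    · rw [sub_zero, abs_of_pos hR]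
      have h0 : 0 ≤ 2 * B0 / m := by positivity
      calc B0 * R ≤ B0 * ε := by gcongr
        _ = B0 / Real.sqrt n := by rw [hε]; ring
        _ ≤ _ := by gcongr; linarith
  push Not at hcase
  have hsub : Set.Icc ε R ⊆ Set.Ioc 0 R := fun x hx => ⟨by linarith [hx.1], hx.2⟩
  have hsub' : Set.Icc ε R ⊆ Set.Icc 0 R := fun x hx => ⟨by linarith [hx.1], hx.2⟩
  have hi1 : IntervalIntegrable (fun x => Complex.exp (Complex.I * (n * F x : ℝ)) * (K x : ℂ)) volume 0 ε := by
    apply hInteg.mono_set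
    rw [Set.uIcc_of_le hε0.le, Set.uIcc_of_le hR.le]; exact Set.Icc_subset_Icc_right hcase.le
  have hi2 : IntervalIntegrable (fun x => Complex.exp (Complex.I * (n * F x : ℝ)) * (K x : ℂ)) volume ε R := by
    apply hInteg.mono_set
    rw [Set.uIcc_of_le hcase.le, Set.uIcc_of_le hR.le]; exact Set.Icc_subset_Icc_left hε0.le
  rw [← intervalIntegral.integral_add_adjacent_intervals hi1 hi2]
  have b1 : ‖∫ x in (0:ℝ)..ε, Complex.exp (Complex.I * (n * F x : ℝ)) * (K x : ℂ)‖ ≤ B0 * ε := by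
    refine (intervalIntegral.norm_integral_le_of_norm_le_const (C := B0) ?_).trans ?_
    · intro x hx
      rw [Set.uIoc_of_le hε0.le] at hx
      exact hfb x ⟨hx.1, by linarith [hx.2]⟩
    · rw [sub_zero, abs_of_pos hε0]
  -- the quotient of the amplitude by the derivative of the phase, for the partial integration
  set W : ℝ → ℝ := fun x => K x / (x * q x) with hW
  set W1 : ℝ → ℝ := fun x => (K1 x * (x * q x) - K x * (1 * q x + x * q1 x)) / (x * q x) ^ 2 with hW1
  have hpos : ∀ x ∈ Set.Icc ε R, 0 < x ∧ 0 < q x := fun x hx =>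
    ⟨(hsub hx).1, hm.trans_le (hqm x (hsub' hx))⟩
  have hWd : ∀ x ∈ Set.Icc ε R, HasDerivAt W (W1 x) x := by
    intro x hx
    obtain ⟨h1, h2⟩ := hpos x hx
    exact (hK x (hsub hx)).div ((hasDerivAt_id x).mul (hq x (hsub' hx))) (by positivity)
  have hW1b : ∀ x ∈ Set.Icc ε R, |W1 x| ≤ Cb / x ^ 2 := by
    intro x hx
    obtain ⟨h1, h2⟩ := hpos x hx
    have hqx := hqm x (hsub' hx)
    have e : W1 x = K1 x / (x * q x) - K x / (x ^ 2 * q x) - K x * q1 x * x / (x ^ 2 * q x ^ 2) := by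
      simp only [hW1]; field_simp; ring
    have t1 : |K1 x / (x * q x)| ≤ (3 * B0 / x) / (x * m) := by
      rw [abs_div, abs_of_pos (by positivity : 0 < x * q x)]
      have := hK1 x (hsub hx)
      gcongr
    have t2 : |K x / (x ^ 2 * q x)| ≤ B0 / (x ^ 2 * m) := by
      rw [abs_div, abs_of_pos (by positivity : 0 < x ^ 2 * q x)]
      have := hKb x (hsub hx)
      gcongr
    have t3 : |K x * q1 x * x / (x ^ 2 * q x ^ 2)| ≤ B0 * B * R0 / (x ^ 2 * m ^ 2) := by
      rw [abs_div, abs_of_pos (by positivity : 0 < x ^ 2 * q x ^ 2), abs_mul, abs_mul, abs_of_pos h1]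
      have := hKb x (hsub hx)
      have := hq1 x (hsub' hx)
      have : x ≤ R0 := by linarith [hx.2]
      gcongr
    rw [e]
    refine (abs_sub _ _).trans ((add_le_add (abs_sub _ _) le_rfl).trans ?_)
    refine (add_le_add (add_le_add t1 t2) t3).trans (le_of_eq ?_)
    rw [hCb]; field_simp; ring
  have hW1c : ContinuousOn W1 (Set.Icc ε R) := by
    have a1 := hK1c.mono hsub
    have a2 := hKc.mono hsub
    have a3 := hqc.mono hsub'
    have a4 := hq1c.mono hsub'
    apply ContinuousOn.div (by fun_prop) (by fun_prop)
    intro x hx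
    obtain ⟨h1, h2⟩ := hpos x hx
    positivity
  have hn' : (n : ℂ) ≠ 0 := by exact_mod_cast hn.ne'
  have hcI : ContinuousOn (fun x => Complex.exp (Complex.I * (n * F x : ℝ)) * (W1 x : ℂ) / (Complex.I * n)) (Set.Icc ε R) := by
    have := hec.mono hsub'
    fun_prop
  have hi3 : IntervalIntegrable (fun x => Complex.exp (Complex.I * (n * F x : ℝ)) * (W1 x : ℂ) / (Complex.I * n)) volume ε R := by
    apply ContinuousOn.intervalIntegrable; rwa [Set.uIcc_of_le hcase.le]
  have hFTC : (∫ x in ε..R, (Complex.exp (Complex.I * (n * F x : ℝ)) * (K x : ℂ) +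
      Complex.exp (Complex.I * (n * F x : ℝ)) * (W1 x : ℂ) / (Complex.I * n))) =
      Complex.exp (Complex.I * (n * F R : ℝ)) * (W R : ℂ) / (Complex.I * n) -
      Complex.exp (Complex.I * (n * F ε : ℝ)) * (W ε : ℂ) / (Complex.I * n) := by
    refine intervalIntegral.integral_eq_sub_of_hasDerivAt 
      (f := fun x => Complex.exp (Complex.I * (n * F x : ℝ)) * (W x : ℂ) / (Complex.I * n)) ?_ (hi2.add hi3)
    intro x hx
    rw [Set.uIcc_of_le hcase.le] at hx
    obtain ⟨h1, h2⟩ := hpos x hx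
    refine (((hasDerivAt_osc n (hF x (hsub' hx))).mul (hWd x hx).ofReal_comp).div_const (Complex.I * n)).congr_deriv ?_
    have h1' : (x : ℂ) ≠ 0 := by exact_mod_cast h1.ne'
    have h2' : (q x : ℂ) ≠ 0 := by exact_mod_cast h2.ne'
    simp only [hW]
    push_cast
    have := Complex.I_ne_zero
    field_simp
  rw [intervalIntegral.integral_add hi2 hi3] at hFTC
  have hb3 : ‖∫ x in ε..R, Complex.exp (Complex.I * (n * F x : ℝ)) * (W1 x : ℂ) / (Complex.I * n)‖ ≤ Cb / Real.sqrt n := by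
    have hd2 : ∀ x ∈ Set.uIcc ε R, HasDerivAt (fun x : ℝ => -(Cb / n) * x⁻¹) (Cb / n / x ^ 2) x := by
      intro x hx
      rw [Set.uIcc_of_le hcase.le] at hx
      obtain ⟨h1, h2⟩ := hpos x hx
      refine ((hasDerivAt_inv h1.ne').const_mul (-(Cb / n))).congr_deriv ?_
      field_simp
    have hci2 : IntervalIntegrable (fun x : ℝ => Cb / n / x ^ 2) volume ε R := by
      apply ContinuousOn.intervalIntegrable
      apply ContinuousOn.div (by fun_prop) (by fun_prop)
      intro x hx
      rw [Set.uIcc_of_le hcase.le] at hx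
      obtain ⟨h1, h2⟩ := hpos x hx
      positivity
    refine (intervalIntegral.norm_integral_le_of_norm_le hcase.le (g := fun x : ℝ => Cb / n / x ^ 2) ?_ hci2).trans ?_
    · refine Eventually.of_forall fun x hx => ?_
      rw [norm_div, norm_mul, norm_osc, norm_mul, Complex.norm_I, Complex.norm_real, Complex.norm_real, one_mul, one_mul,
        Real.norm_of_nonneg hn.le, Real.norm_eq_abs]
      calc |W1 x| / n ≤ Cb / x ^ 2 / n := by gcongr; exact hW1b x ⟨hx.1.le, hx.2⟩
        _ = _ := by ring
    · rw [intervalIntegral.integral_eq_sub_of_hasDerivAt hd2 hci2]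
      have : 0 ≤ Cb / n * R⁻¹ := by positivity
      have e2 : Cb / Real.sqrt n = Cb / n * ε⁻¹ := by
        rw [← hnε]; field_simp
      rw [e2]; linarith
  have hWb : ∀ x ∈ Set.Icc ε R, ‖Complex.exp (Complex.I * (n * F x : ℝ)) * (W x : ℂ) / (Complex.I * n)‖ ≤ B0 / m / Real.sqrt n := by
    intro x hx
    obtain ⟨h1, h2⟩ := hpos x hx
    have hqx := hqm x (hsub' hx)
    rw [norm_div, norm_mul, norm_osc, norm_mul, Complex.norm_I, Complex.norm_real, Complex.norm_real, one_mul, one_mul,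
        Real.norm_of_nonneg hn.le, Real.norm_eq_abs]
    simp only [hW]
    rw [abs_div, abs_of_pos (by positivity : 0 < x * q x)]
    have := hKb x (hsub hx)
    have := hx.1
    calc |K x| / (x * q x) / n ≤ B0 / (ε * m) / n := by gcongr
      _ = B0 / m / (n * ε) := by field_simp
      _ = _ := by rw [hnε]
  have hmain : ‖∫ x in ε..R, Complex.exp (Complex.I * (n * F x : ℝ)) * (K x : ℂ)‖ ≤ B0 / m / Real.sqrt n + B0 / m / Real.sqrt n + Cb / Real.sqrt n := by
    rw [eq_sub_of_add_eq hFTC]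
    refine (norm_sub_le _ _).trans (add_le_add ((norm_sub_le _ _).trans (add_le_add ?_ ?_)) hb3)
    · exact hWb R ⟨hcase.le, le_rfl⟩
    · exact hWb ε ⟨le_rfl, hcase.le⟩
  refine (norm_add_le _ _).trans ((add_le_add b1 hmain).trans (le_of_eq ?_))
  rw [hε]; ring

/-- One-sided stationary phase with error `O(n^(-3/2))`, for a phase `F = x² p` with derivative `x q`.
In the Morse coordinate `w = x √(2 p)` one has `F = w² / 2`, so the part `G0 q / √(2 p)` of the
amplitude gives a truncated Fresnel integral. The rest `q N` has `N(0) = 0` and is integrated by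
parts; the integral that remains contains the derivative of `N / x` and is estimated by `vdc_bound`. -/
lemma half_stationary {n R r0 R0 m B G0 : ℝ} {F p q q1 g N N1 N2 : ℝ → ℝ} (hn : 1 ≤ n) (hr0 : 0 < r0) (hR : r0 ≤ R) (hR0 : R ≤ R0)
    (hm : 0 < m) (hB : 0 ≤ B) (hG0 : |G0| ≤ B)
    (hF : ∀ x ∈ Set.Icc 0 R, HasDerivAt F (x * q x) x)
    (hFp : ∀ x ∈ Set.Icc 0 R, F x = x ^ 2 * p x)
    (hpm : ∀ x ∈ Set.Icc 0 R, m ≤ p x)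
    (hpc : ContinuousOn p (Set.Icc 0 R))
    (hq : ∀ x ∈ Set.Icc 0 R, HasDerivAt q (q1 x) x)
    (hqm : ∀ x ∈ Set.Icc 0 R, m ≤ q x) (hq1 : ∀ x ∈ Set.Icc 0 R, |q1 x| ≤ B)
    (hq1c : ContinuousOn q1 (Set.Icc 0 R))
    (hN : ∀ x ∈ Set.Icc 0 R, HasDerivAt N (N1 x) x)
    (hN1 : ∀ x ∈ Set.Icc 0 R, HasDerivAt N1 (N2 x) x)
    (hN2 : ∀ x ∈ Set.Icc 0 R, |N2 x| ≤ B) (hN2c : ContinuousOn N2 (Set.Icc 0 R))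
    (hN0 : N 0 = 0)
    (hg : ∀ x ∈ Set.Icc 0 R, g x = q x * (N x + G0 / Real.sqrt (2 * p x))) :
    ‖(∫ x in (0:ℝ)..R, Complex.exp (Complex.I * (n * F x : ℝ)) * (g x : ℂ)) -
      (G0 * (Real.sqrt (2 * Real.pi / n) / 2 * Complex.exp (Complex.I * (Real.pi / 4 : ℝ)))
       + Complex.exp (Complex.I * (n * F R : ℝ)) * g R / (Complex.I * n * (R * q R))
       - N1 0 / (Complex.I * n))‖ ≤
      (B * (2 / (r0 * Real.sqrt (2 * m)) ^ 3) + (B + 2 * B / m + (4 * B / m + B * B * R0 / m ^ 2))) / (n * Real.sqrt n) := by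
  have hn0 : 0 < n := by linarith
  have hRp : 0 < R := by linarith
  have hn' : (n : ℂ) ≠ 0 := by exact_mod_cast hn0.ne'
  have hFc : ContinuousOn F (Set.Icc 0 R) := fun x hx => (hF x hx).continuousAt.continuousWithinAt
  have hqc : ContinuousOn q (Set.Icc 0 R) := fun x hx => (hq x hx).continuousAt.continuousWithinAt
  have hNc : ContinuousOn N (Set.Icc 0 R) := fun x hx => (hN x hx).continuousAt.continuousWithinAt
  have hN1c : ContinuousOn N1 (Set.Icc 0 R) := fun x hx => (hN1 x hx).continuousAt.continuousWithinAt
  have hec : ContinuousOn (fun x => Complex.exp (Complex.I * (n * F x : ℝ))) (Set.Icc 0 R) := by fun_prop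
  have hsp : ∀ x ∈ Set.Icc 0 R, 0 < Real.sqrt (2 * p x) := fun x hx =>
    Real.sqrt_pos.2 (by linarith [hpm x hx])
  have hgc : ContinuousOn g (Set.Icc 0 R) := by
    have : ContinuousOn (fun x => q x * (N x + G0 / Real.sqrt (2 * p x))) (Set.Icc 0 R) := by
      refine hqc.mul (hNc.add (ContinuousOn.div continuousOn_const ?_ fun x hx => (hsp x hx).ne'))
      exact (continuousOn_const.mul hpc).sqrt
    exact this.congr hg
  -- the Morse coordinate, in which the phase is exactly `w² / 2`
  set w : ℝ → ℝ := fun x => x * Real.sqrt (2 * p x) with hw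
  have hwc : ContinuousOn w (Set.Icc 0 R) := continuousOn_id.mul (continuousOn_const.mul hpc).sqrt
  have hw2 : ∀ x ∈ Set.Icc 0 R, w x ^ 2 / 2 = F x := by
    intro x hx
    simp only [hw]
    rw [mul_pow, Real.sq_sqrt (by linarith [hpm x hx]), hFp x hx]; ring
  have hwd : ∀ x ∈ Set.Ioo 0 R, HasDerivAt w (q x / Real.sqrt (2 * p x)) x := by
    intro x hx
    have hx' : x ∈ Set.Icc 0 R := ⟨hx.1.le, hx.2.le⟩
    have hp := hpm x hx'
    have hFpos : 0 < F x := by rw [hFp x hx']; exact mul_pos (pow_pos hx.1 2) (by linarith)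
    have h1 : HasDerivAt (fun x => Real.sqrt (2 * F x)) (2 * (x * q x) / (2 * Real.sqrt (2 * F x))) x :=
      ((hF x hx').const_mul 2).sqrt (by positivity)
    have hsq : ∀ y ∈ Set.Icc 0 R, Real.sqrt (2 * F y) = w y := by
      intro y hy
      rw [← hw2 y hy, mul_div_cancel₀ _ (two_ne_zero), Real.sqrt_sq]
      exact mul_nonneg hy.1 (Real.sqrt_nonneg _)
    have h2 : HasDerivAt w (2 * (x * q x) / (2 * Real.sqrt (2 * F x))) x := by
      refine h1.congr_of_eventuallyEq ?_
      filter_upwards [Icc_mem_nhds hx.1 hx.2] with y hy using (hsq y hy).symm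
    refine h2.congr_deriv ?_
    rw [hsq x hx']
    simp only [hw]
    have := hsp x hx'
    have := hx.1
    field_simp
  -- the divided difference `N x / x`, extended by its limit to `x = 0`
  set k : ℝ → ℝ := dslope N 0 with hk
  have hk0 : k 0 = N1 0 := by
    rw [hk, dslope_same]; exact (hN 0 ⟨le_rfl, hRp.le⟩).deriv
  have hkx : ∀ x, x ≠ 0 → k x = N x / x := by
    intro x hx
    rw [hk, dslope_of_ne _ hx, slope_def_field, hN0, sub_zero, sub_zero]
  have hkc : ContinuousOn k (Set.Icc 0 R) := by
    intro x hx
    by_cases h0 : x = 0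
    · subst h0
      exact (continuousAt_dslope_same.2 (hN 0 hx).differentiableAt).continuousWithinAt
    · exact ((continuousAt_dslope_of_ne h0).2 (hN x hx).continuousAt).continuousWithinAt
  set κ : ℝ → ℝ := fun x => (N1 x * x - N x * 1) / x ^ 2 with hκ
  set κ1 : ℝ → ℝ := fun x => ((N2 x * x + N1 x * 1 - N1 x * 1) * x ^ 2 - (N1 x * x - N x * 1) * (2 * x)) / (x ^ 2) ^ 2 with hκ1
  have hkd : ∀ x ∈ Set.Ioc 0 R, HasDerivAt k (κ x) x := by
    intro x hx
    have hx' : x ∈ Set.Icc 0 R := ⟨hx.1.le, hx.2⟩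
    refine ((hN x hx').div (hasDerivAt_id x) hx.1.ne').congr_of_eventuallyEq ?_
    filter_upwards [lt_mem_nhds hx.1] with y hy using hkx y hy.ne'
  have hκd : ∀ x ∈ Set.Ioc 0 R, HasDerivAt κ (κ1 x) x := by
    intro x hx
    have hx' : x ∈ Set.Icc 0 R := ⟨hx.1.le, hx.2⟩
    have h1 := ((hN1 x hx').mul (hasDerivAt_id x)).sub ((hN x hx').mul_const 1)
    have := h1.div (hasDerivAt_pow 2 x) (by have := hx.1; positivity)
    refine this.congr_deriv ?_
    simp [hκ1]
  have hTay : ∀ x ∈ Set.Icc 0 R, |N1 x * x - N x * 1| ≤ B * x ^ 2 := by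
    intro x hx
    have := Convex.norm_image_sub_le_of_norm_hasDerivWithin_le (f := fun y => N1 y * y - N y * 1)
      (f' := fun y => N2 y * y) (s := Set.Icc 0 x) (x := 0) (y := x) (C := B * x) ?_ ?_ (convex_Icc _ _) ⟨le_rfl, hx.1⟩ ⟨hx.1, le_rfl⟩
    · simp only [hN0, mul_zero, zero_mul, sub_zero, Real.norm_eq_abs, abs_of_nonneg hx.1] at this
      refine this.trans (le_of_eq (by ring))
    · intro y hy
      have hy' : y ∈ Set.Icc 0 R := ⟨hy.1, hy.2.trans hx.2⟩
      have h1 := ((hN1 y hy').mul (hasDerivAt_id y)).sub ((hN y hy').mul_const 1)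
      refine (h1.congr_deriv ?_).hasDerivWithinAt
      simp
    · intro y hy
      have hy' : y ∈ Set.Icc 0 R := ⟨hy.1, hy.2.trans hx.2⟩
      rw [Real.norm_eq_abs, abs_mul, abs_of_nonneg hy.1]
      exact mul_le_mul (hN2 y hy') hy.2 hy.1 hB
  have hκb : ∀ x ∈ Set.Ioc 0 R, |κ x| ≤ B := by
    intro x hx
    have hx0 := hx.1
    simp only [hκ]
    rw [abs_div, abs_of_pos (by positivity : 0 < x ^ 2), div_le_iff₀ (by positivity)]
    exact hTay x ⟨hx.1.le, hx.2⟩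
  have hκder_bound : ∀ x ∈ Set.Ioc 0 R, |κ1 x| ≤ 3 * B / x := by
    intro x hx
    have hx0 := hx.1
    have e : κ1 x = N2 x / x - 2 * κ x / x := by
      simp only [hκ1, hκ]; field_simp; ring
    rw [e, ← sub_div, abs_div, abs_of_pos hx0]
    gcongr
    refine (abs_sub _ _).trans ?_
    rw [abs_mul, abs_two]
    linarith [hN2 x ⟨hx.1.le, hx.2⟩, hκb x hx]
  have hκder_cont : ContinuousOn κ1 (Set.Ioc 0 R) := by
    have a1 := hN2c.mono Set.Ioc_subset_Icc_self
    have a2 := hN1c.mono Set.Ioc_subset_Icc_self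
    have a3 := hNc.mono Set.Ioc_subset_Icc_self
    refine ContinuousOn.div (by fun_prop) (by fun_prop) ?_
    intro x hx
    have := hx.1
    positivity
  have hκc : ContinuousOn κ (Set.Ioc 0 R) := fun x hx => (hκd x hx).continuousAt.continuousWithinAt
  have hvdc := vdc_bound hn0 hRp hR0 hm hB hB hF hq hqm hq1 hq1c hκd hκb hκder_cont hκder_bound
  set Φ : ℝ → ℂ := fun X => ∫ x in (0:ℝ)..X, Complex.exp (Complex.I * (n * (x ^ 2 / 2) : ℝ)) with hΦ
  have hΦd : ∀ X, HasDerivAt Φ (Complex.exp (Complex.I * (n * (X ^ 2 / 2) : ℝ))) X := by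
    intro X
    have hcont : Continuous (fun x : ℝ => Complex.exp (Complex.I * (n * (x ^ 2 / 2) : ℝ))) := by fun_prop
    exact intervalIntegral.integral_hasDerivAt_right (hcont.intervalIntegrable 0 X)
      hcont.stronglyMeasurable.stronglyMeasurableAtFilter hcont.continuousAt
  have hΦc : Continuous Φ := continuous_iff_continuousAt.2 fun X => (hΦd X).continuousAt
  have hi1 : IntervalIntegrable (fun x => Complex.exp (Complex.I * (n * F x : ℝ)) * (g x : ℂ)) volume 0 R := by
    apply ContinuousOn.intervalIntegrable
    rw [Set.uIcc_of_le hRp.le]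
    exact hec.mul (by fun_prop)
  have hi2 : IntervalIntegrable (fun x => Complex.exp (Complex.I * (n * F x : ℝ)) * (κ x : ℂ)) volume 0 R := by
    refine intervalIntegrable_of_bdd_Ioc (C := B) hRp.le ((hec.mono Set.Ioc_subset_Icc_self).mul (by fun_prop)) ?_
    intro x hx
    rw [norm_mul, norm_osc, one_mul, Complex.norm_real]; exact hκb x hx
  have hFTC : (∫ x in (0:ℝ)..R, (Complex.exp (Complex.I * (n * F x : ℝ)) * (g x : ℂ) +
      Complex.exp (Complex.I * (n * F x : ℝ)) * (κ x : ℂ) / (Complex.I * n))) =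
      (G0 * Φ (w R) + Complex.exp (Complex.I * (n * F R : ℝ)) * (k R : ℂ) / (Complex.I * n)) -
      (G0 * Φ (w 0) + Complex.exp (Complex.I * (n * F 0 : ℝ)) * (k 0 : ℂ) / (Complex.I * n)) := by
    refine intervalIntegral.integral_eq_sub_of_hasDerivAt_of_le hRp.le 
      (f := fun x => G0 * Φ (w x) + Complex.exp (Complex.I * (n * F x : ℝ)) * (k x : ℂ) / (Complex.I * n)) ?_ ?_ (hi1.add (hi2.div_const _))
    · refine ContinuousOn.add (continuousOn_const.mul (hΦc.comp_continuousOn hwc)) ?_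
      exact (hec.mul (by fun_prop)).div_const _
    · intro x hx
      have hx' : x ∈ Set.Icc 0 R := ⟨hx.1.le, hx.2.le⟩
      have hx'' : x ∈ Set.Ioc 0 R := ⟨hx.1, hx.2.le⟩
      have h1 : HasDerivAt (fun x => Φ (w x)) _ x := HasDerivAt.scomp x (hΦd (w x)) (hwd x hx)
      have h2 := ((hasDerivAt_osc n (hF x hx')).mul (hkd x hx'').ofReal_comp).div_const (Complex.I * n)
      refine ((h1.const_mul (G0 : ℂ)).add h2).congr_deriv ?_
      rw [hw2 x hx', hg x hx', hkx x hx.1.ne', Complex.real_smul]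
      have h1' : (x : ℂ) ≠ 0 := by exact_mod_cast hx.1.ne'
      have h3' : (Real.sqrt (2 * p x) : ℂ) ≠ 0 := by exact_mod_cast (hsp x hx').ne'
      push_cast
      have := Complex.I_ne_zero
      field_simp
      ring
  rw [intervalIntegral.integral_add hi1 (hi2.div_const _), intervalIntegral.integral_div] at hFTC
  have hw0 : w 0 = 0 := by simp [hw]
  have hF0 : F 0 = 0 := by rw [hFp 0 ⟨le_rfl, hRp.le⟩]; ring
  have hRm : R ∈ Set.Icc 0 R := ⟨hRp.le, le_rfl⟩
  have hwR : r0 * Real.sqrt (2 * m) ≤ w R := by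
    simp only [hw]
    have := hpm R hRm
    gcongr
  have hwRp : 0 < r0 * Real.sqrt (2 * m) := by positivity
  have hfres := fresnel_trunc n (w R) hn0 (by linarith)
  rw [hw0, hF0, hk0] at hFTC
  have hΦ0 : Φ 0 = 0 := by simp [hΦ]
  rw [hΦ0] at hFTC
  change ‖Φ (w R) - _‖ ≤ _ at hfres
  rw [hw2 R hRm] at hfres
  set I1 := ∫ x in (0:ℝ)..R, Complex.exp (Complex.I * (n * F x : ℝ)) * (g x : ℂ)
  set I2 := ∫ x in (0:ℝ)..R, Complex.exp (Complex.I * (n * F x : ℝ)) * (κ x : ℂ)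
  set eR := Complex.exp (Complex.I * (n * F R : ℝ))
  set S : ℂ := Real.sqrt (2 * Real.pi / n) / 2 * Complex.exp (Complex.I * (Real.pi / 4 : ℝ))
  have hsplit : I1 - (G0 * S + eR * g R / (Complex.I * n * (R * q R)) - N1 0 / (Complex.I * n)) =
      G0 * (Φ (w R) - (S + eR / (Complex.I * n * w R))) - I2 / (Complex.I * n) := by
    rw [eq_sub_of_add_eq hFTC, hg R hRm, hkx R hRp.ne']
    have h1' : (R : ℂ) ≠ 0 := by exact_mod_cast hRp.ne'
    have h2' : (q R : ℂ) ≠ 0 := by exact_mod_cast (hm.trans_le (hqm R hRm)).ne'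
    have h3' : (Real.sqrt (2 * p R) : ℂ) ≠ 0 := by exact_mod_cast (hsp R hRm).ne'
    simp only [hw]
    have := Complex.I_ne_zero
    push_cast
    simp only [mul_zero, Complex.exp_zero]
    field_simp
    ring
  rw [hsplit]
  have hs1 : 1 ≤ Real.sqrt n := Real.one_le_sqrt.2 hn
  have hnn : n * Real.sqrt n ≤ n ^ 2 := by
    rw [sq]; gcongr
    exact Real.sqrt_le_self_iff.2 (Or.inr hn)
  have c1 : ‖G0 * (Φ (w R) - (S + eR / (Complex.I * n * w R)))‖ ≤ B * (2 / (r0 * Real.sqrt (2 * m)) ^ 3) / (n * Real.sqrt n) := by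
    rw [norm_mul, Complex.norm_real]
    calc ‖G0‖ * ‖(Φ (w R) - (S + eR / (Complex.I * n * w R)))‖ ≤ B * (2 / (n ^ 2 * w R ^ 3)) := by
          gcongr
          exact hG0
      _ ≤ B * (2 / ((n * Real.sqrt n) * (r0 * Real.sqrt (2 * m)) ^ 3)) := by gcongr
      _ = _ := by field_simp
  have c2 : ‖I2 / (Complex.I * n)‖ ≤ (B + 2 * B / m + (4 * B / m + B * B * R0 / m ^ 2)) / (n * Real.sqrt n) := by
    rw [norm_div, norm_mul, Complex.norm_I, Complex.norm_real, one_mul, Real.norm_of_nonneg hn0.le, div_le_iff₀ hn0]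
    refine hvdc.trans (le_of_eq ?_)
    field_simp
  refine (norm_sub_le _ _).trans ((add_le_add c1 c2).trans (le_of_eq ?_))
  ring

/-! ### Uniformity in the stationary point -/

/-- The weighted mean `∫₀¹ ω(u) φ(t₀ + u x) du`. -/
def wavg (ω φ : ℝ → ℝ) (t₀ x : ℝ) : ℝ := ∫ u in (0:ℝ)..1, ω u * φ (t₀ + u * x)

lemma continuous_wavg {ω φ : ℝ → ℝ} (hω : Continuous ω) (hφ : Continuous φ) :
    Continuous (fun z : ℝ × ℝ => wavg ω φ z.1 z.2) := by
  unfold wavg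
  apply intervalIntegral.continuous_parametric_intervalIntegral_of_continuous'
  unfold Function.uncurry
  fun_prop

lemma hasDerivAt_wavg {ω φ φ1 : ℝ → ℝ} (hω : Continuous ω) (hφ : ∀ t, HasDerivAt φ (φ1 t) t)
    (hφ1 : Continuous φ1) (t₀ x : ℝ) :
    HasDerivAt (wavg ω φ t₀) (wavg (fun u => ω u * u) φ1 t₀ x) x := by
  have hφc : Continuous φ := continuous_iff_continuousAt.2 fun t => (hφ t).continuousAt
  obtain ⟨C, hC⟩ := ((isCompact_closedBall x 1).prod (isCompact_Icc (a := (0:ℝ)) (b := 1))).exists_bound_of_continuousOn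
    (f := fun z : ℝ × ℝ => (ω z.2 * z.2) * φ1 (t₀ + z.2 * z.1)) (by fun_prop)
  refine (intervalIntegral.hasDerivAt_integral_of_dominated_loc_of_deriv_le (μ := volume)
    (F := fun x u => ω u * φ (t₀ + u * x)) (F' := fun x u => (ω u * u) * φ1 (t₀ + u * x))
    (bound := fun _ => C) (s := Metric.closedBall x 1) (x₀ := x)
    (Metric.closedBall_mem_nhds x one_pos) ?_ ?_ ?_ ?_ ?_ ?_).2
  · refine Eventually.of_forall fun y => Continuous.aestronglyMeasurable (by fun_prop)
  · exact Continuous.intervalIntegrable (by fun_prop) _ _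
  · exact Continuous.aestronglyMeasurable (by fun_prop)
  · refine Eventually.of_forall fun u hu y hy => ?_
    rw [Set.uIoc_of_le zero_le_one] at hu
    exact hC (y, u) ⟨hy, hu.1.le, hu.2⟩
  · simp
  · refine Eventually.of_forall fun u hu y hy => ?_
    have h1 : HasDerivAt (fun y => t₀ + u * y) u y := by
      simpa using ((hasDerivAt_id y).const_mul u).const_add t₀
    exact (((hφ (t₀ + u * y)).comp y h1).const_mul (ω u)).congr_deriv (by ring)

lemma wavg_zero (ω φ : ℝ → ℝ) (t₀ : ℝ) : wavg ω φ t₀ 0 = (∫ u in (0:ℝ)..1, ω u) * φ t₀ := by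
  simp [wavg]

lemma integral_w1 : ∫ u in (0:ℝ)..1, (1 - u) = 1 / 2 := by
  rw [intervalIntegral.integral_sub (by simp) (by simp)]; norm_num

lemma integral_w2 : ∫ u in (0:ℝ)..1, (1 - u) * u = 1 / 6 := by
  have : ∀ u : ℝ, (1 - u) * u = u - u ^ 2 := fun u => by ring
  simp only [this]
  rw [intervalIntegral.integral_sub (by simp) (by simp)]; norm_num

lemma integral_w3 : ∫ u in (0:ℝ)..1, (1 - u) * (1 - u) = 1 / 3 := by
  have : ∀ u : ℝ, (1 - u) * (1 - u) = 1 - u - (u - u ^ 2) := fun u => by ring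
  simp only [this]
  rw [intervalIntegral.integral_sub (Continuous.intervalIntegrable (by fun_prop) _ _) (Continuous.intervalIntegrable (by fun_prop) _ _),
    integral_w1, intervalIntegral.integral_sub (by simp) (by simp)]; norm_num

/-- Taylor expansion of order one with integral remainder. -/
lemma taylor_wavg1 {v φ : ℝ → ℝ} (hv : ∀ t, HasDerivAt v (φ t) t) (hφ : Continuous φ) (t₀ x : ℝ) :
    v (t₀ + x) - v t₀ = x * wavg (fun _ => 1) φ t₀ x := by
  have h := intervalIntegral.integral_eq_sub_of_hasDerivAt (a := 0) (b := 1) (f := fun u => v (t₀ + u * x))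
    (f' := fun u => x * (1 * φ (t₀ + u * x))) ?_ (Continuous.intervalIntegrable (by fun_prop) _ _)
  · rw [intervalIntegral.integral_const_mul] at h
    rw [wavg, h]; simp
  · intro u _
    have h1 : HasDerivAt (fun u => t₀ + u * x) x u := by
      simpa using ((hasDerivAt_id u).mul_const x).const_add t₀
    exact ((hv _).comp u h1).congr_deriv (by ring)

/-- Taylor expansion of order two with integral remainder. -/
lemma taylor_wavg2 {μ v φ : ℝ → ℝ} (hμ : ∀ t, HasDerivAt μ (v t) t) (hv : ∀ t, HasDerivAt v (φ t) t)
    (hφ : Continuous φ) (t₀ x : ℝ) :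
    μ (t₀ + x) - μ t₀ - v t₀ * x = x ^ 2 * wavg (fun u => 1 - u) φ t₀ x := by
  have h := intervalIntegral.integral_eq_sub_of_hasDerivAt (a := 0) (b := 1)
    (f := fun u => (1 - u) * (x * v (t₀ + u * x)) + μ (t₀ + u * x))
    (f' := fun u => x ^ 2 * ((1 - u) * φ (t₀ + u * x))) ?_ (Continuous.intervalIntegrable (by fun_prop) _ _)
  · rw [intervalIntegral.integral_const_mul] at h
    rw [wavg, h]; simp; ring
  · intro u _
    have h1 : HasDerivAt (fun u => t₀ + u * x) x u := by
      simpa using ((hasDerivAt_id u).mul_const x).const_add t₀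
    have h2 := (((hasDerivAt_id u).const_sub 1).mul (((hv _).comp u h1).const_mul x)).add ((hμ _).comp u h1)
    refine h2.congr_deriv ?_
    simp only [Function.comp_apply, id]
    ring

/-- Stationary phase on `[t₀, L]` up to `O(n^(-3/2))`, with a constant that does not depend on the
stationary point `t₀ ∈ [-T, T]`. The hypothesis `hlow` keeps the weighted means `p` and `q` of `φ`,
which are the `p` and `q` of `half_stationary`, away from zero although `φ` itself may vanish
at `L`; the remaining bounds follow from compactness. -/
lemma uniform_half {μ v φ φ1 φ2 g g1 g2 : ℝ → ℝ}
    (hμ : ∀ t, HasDerivAt μ (v t) t) (hv : ∀ t, HasDerivAt v (φ t) t)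
    (hφ : ∀ t, HasDerivAt φ (φ1 t) t) (hφ1 : ∀ t, HasDerivAt φ1 (φ2 t) t) (hφ2 : Continuous φ2)
    (hg : ∀ t, HasDerivAt g (g1 t) t) (hg1 : ∀ t, HasDerivAt g1 (g2 t) t) (hg2 : Continuous g2)
    {L T m : ℝ} (hT : T < L) (hm : 0 < m)
    (hlow : ∀ t₀ ∈ Set.Icc (-T) T, ∀ x ∈ Set.Icc 0 (L - t₀), ∀ u ∈ Set.Icc (0:ℝ) 1,
      (1 - u) * m ≤ φ (t₀ + u * x)) :
    ∃ C : ℝ, 0 < C ∧ ∀ t₀ ∈ Set.Icc (-T) T, ∀ n : ℝ, 1 ≤ n →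
      ‖(∫ t in t₀..L, Complex.exp (Complex.I * (n * (μ t - μ t₀ - v t₀ * (t - t₀)) : ℝ)) * (g t : ℂ)) -
      ((g t₀ / Real.sqrt (φ t₀) : ℝ) * (Real.sqrt (2 * Real.pi / n) / 2 * Complex.exp (Complex.I * (Real.pi / 4 : ℝ)))
       + Complex.exp (Complex.I * (n * (μ L - μ t₀ - v t₀ * (L - t₀)) : ℝ)) * g L
          / (Complex.I * n * ((v L - v t₀ : ℝ) : ℂ))
       - ((g1 t₀ / φ t₀ - g t₀ * φ1 t₀ / (3 * φ t₀ ^ 2) : ℝ) : ℂ) / (Complex.I * n))‖ ≤ C / (n * Real.sqrt n) := by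
  have cφ : Continuous φ := continuous_iff_continuousAt.2 fun t => (hφ t).continuousAt
  have cφ1 : Continuous φ1 := continuous_iff_continuousAt.2 fun t => (hφ1 t).continuousAt
  have cg : Continuous g := continuous_iff_continuousAt.2 fun t => (hg t).continuousAt
  have cg1 : Continuous g1 := continuous_iff_continuousAt.2 fun t => (hg1 t).continuousAt
  set Z : Set (ℝ × ℝ) := {z | z.1 ∈ Set.Icc (-T) T ∧ z.2 ∈ Set.Icc 0 (L - z.1)} with hZ
  have hZc : IsCompact Z := by
    refine IsCompact.of_isClosed_subset ((isCompact_Icc (a := -T) (b := T)).prod (isCompact_Icc (a := (0:ℝ)) (b := L + T))) ?_ ?_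
    · have h1 : IsClosed {z : ℝ × ℝ | -T ≤ z.1} := isClosed_le (by fun_prop) (by fun_prop)
      have h2 : IsClosed {z : ℝ × ℝ | z.1 ≤ T} := isClosed_le (by fun_prop) (by fun_prop)
      have h3 : IsClosed {z : ℝ × ℝ | 0 ≤ z.2} := isClosed_le (by fun_prop) (by fun_prop)
      have h4 : IsClosed {z : ℝ × ℝ | z.2 ≤ L - z.1} := isClosed_le (by fun_prop) (by fun_prop)
      exact (h1.inter h2).inter (h3.inter h4)
    · rintro ⟨t, x⟩ ⟨⟨h1, h2⟩, h3, h4⟩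
      simp only at h1 h2 h3 h4
      exact ⟨⟨h1, h2⟩, h3, by simp only; linarith⟩
  set q := wavg (fun _ => 1) φ with hqd
  set q1 := wavg (fun u => 1 * u) φ1 with hq1d
  set q2 := wavg (fun u => 1 * u * u) φ2 with hq2d
  set p := wavg (fun u => 1 - u) φ with hpd
  set p1 := wavg (fun u => (1 - u) * u) φ1 with hp1d
  set p2 := wavg (fun u => (1 - u) * u * u) φ2 with hp2d
  have dq : ∀ t x, HasDerivAt (q t) (q1 t x) x := hasDerivAt_wavg (by fun_prop) hφ cφ1
  have dq1 : ∀ t x, HasDerivAt (q1 t) (q2 t x) x := hasDerivAt_wavg (by fun_prop) hφ1 hφ2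
  have dp : ∀ t x, HasDerivAt (p t) (p1 t x) x := hasDerivAt_wavg (by fun_prop) hφ cφ1
  have dp1 : ∀ t x, HasDerivAt (p1 t) (p2 t x) x := hasDerivAt_wavg (by fun_prop) hφ1 hφ2
  have cq : Continuous fun z : ℝ × ℝ => q z.1 z.2 := continuous_wavg (by fun_prop) cφ
  have cq1 : Continuous fun z : ℝ × ℝ => q1 z.1 z.2 := continuous_wavg (by fun_prop) cφ1
  have cq2 : Continuous fun z : ℝ × ℝ => q2 z.1 z.2 := continuous_wavg (by fun_prop) hφ2
  have cp : Continuous fun z : ℝ × ℝ => p z.1 z.2 := continuous_wavg (by fun_prop) cφ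
  have cp1 : Continuous fun z : ℝ × ℝ => p1 z.1 z.2 := continuous_wavg (by fun_prop) cφ1
  have cp2 : Continuous fun z : ℝ × ℝ => p2 z.1 z.2 := continuous_wavg (by fun_prop) hφ2
  have hqlow : ∀ z ∈ Z, m / 3 ≤ q z.1 z.2 := by
    rintro ⟨t, x⟩ ⟨ht, hx⟩
    simp only at ht hx ⊢
    have : ∫ u in (0:ℝ)..1, (1 - u) * m ≤ q t x := by
      refine intervalIntegral.integral_mono_on zero_le_one (Continuous.intervalIntegrable (by fun_prop) _ _)
        (Continuous.intervalIntegrable (by fun_prop) _ _) ?_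
      intro u hu
      rw [one_mul]; exact hlow t ht x hx u hu
    rw [intervalIntegral.integral_mul_const, integral_w1] at this
    linarith
  have hplow : ∀ z ∈ Z, m / 3 ≤ p z.1 z.2 := by
    rintro ⟨t, x⟩ ⟨ht, hx⟩
    simp only at ht hx ⊢
    have : ∫ u in (0:ℝ)..1, (1 - u) * (1 - u) * m ≤ p t x := by
      refine intervalIntegral.integral_mono_on zero_le_one (Continuous.intervalIntegrable (by fun_prop) _ _)
        (Continuous.intervalIntegrable (by fun_prop) _ _) ?_
      intro u hu
      rw [mul_assoc]
      exact mul_le_mul_of_nonneg_left (hlow t ht x hx u hu) (by linarith [hu.2])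
    rw [intervalIntegral.integral_mul_const, integral_w3] at this
    linarith
  have hm3 : 0 < m / 3 := by positivity
  have hφlow : ∀ t ∈ Set.Icc (-T) T, m ≤ φ t := by
    intro t ht
    have := hlow t ht 0 ⟨le_rfl, by linarith [ht.2]⟩ 0 ⟨le_rfl, zero_le_one⟩
    simpa using this
  set G0 : ℝ → ℝ := fun t => g t / Real.sqrt (φ t) with hG0
  set r : ℝ → ℝ → ℝ := fun t x => Real.sqrt (2 * p t x) with hr
  have hrpos : ∀ z ∈ Z, 0 < r z.1 z.2 := fun z hz => Real.sqrt_pos.2 (by linarith [hplow z hz])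
  have hqpos : ∀ z ∈ Z, 0 < q z.1 z.2 := fun z hz => by linarith [hqlow z hz]
  have cr : Continuous fun z : ℝ × ℝ => r z.1 z.2 := (continuous_const.mul cp).sqrt
  have cG0 : ContinuousOn G0 (Set.Icc (-T) T) :=
    ContinuousOn.div (by fun_prop) (by fun_prop) fun t ht => (Real.sqrt_pos.2 (by linarith [hφlow t ht])).ne'
  set N : ℝ → ℝ → ℝ := fun t x => g (t + x) / q t x - G0 t / r t x with hN
  set N1 : ℝ → ℝ → ℝ := fun t x => g1 (t + x) / q t x - g (t + x) * q1 t x / q t x ^ 2 + G0 t * p1 t x / r t x ^ 3 with hN1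
  set N2 : ℝ → ℝ → ℝ := fun t x => g2 (t + x) / q t x - 2 * g1 (t + x) * q1 t x / q t x ^ 2
    - g (t + x) * q2 t x / q t x ^ 2 + 2 * g (t + x) * q1 t x ^ 2 / q t x ^ 3
    + G0 t * p2 t x / r t x ^ 3 - 3 * G0 t * p1 t x ^ 2 / r t x ^ 5 with hN2
  have shift : ∀ {f f1 : ℝ → ℝ}, (∀ t, HasDerivAt f (f1 t) t) → ∀ t x, HasDerivAt (fun x => f (t + x)) (f1 (t + x)) x := by
    intro f f1 h t x
    exact HasDerivAt.comp_const_add t x (h (t + x))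
  have dr : ∀ z ∈ Z, HasDerivAt (r z.1) (p1 z.1 z.2 / r z.1 z.2) z.2 := by
    intro z hz
    have := hplow z hz
    refine (((dp z.1 z.2).const_mul 2).sqrt
      (by have h0 : 0 < p z.1 z.2 := by linarith
          positivity)).congr_deriv ?_
    have := hrpos z hz
    simp only [hr] at this ⊢
    field_simp
  have dN : ∀ z ∈ Z, HasDerivAt (N z.1) (N1 z.1 z.2) z.2 := by
    intro z hz
    have h1 := hqpos z hz
    have h2 := hrpos z hz
    refine (((shift hg z.1 z.2).div (dq z.1 z.2) h1.ne').sub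
      ((hasDerivAt_const z.2 (G0 z.1)).div (dr z hz) h2.ne')).congr_deriv ?_
    simp only [hN1]
    field_simp
    ring
  have dN1 : ∀ z ∈ Z, HasDerivAt (N1 z.1) (N2 z.1 z.2) z.2 := by
    intro z hz
    have h1 := hqpos z hz
    have h2 := hrpos z hz
    refine ((((shift hg1 z.1 z.2).div (dq z.1 z.2) h1.ne').sub
      (((shift hg z.1 z.2).mul (dq1 z.1 z.2)).div ((dq z.1 z.2).pow 2) (by simp [h1.ne']))).add
      (((dp1 z.1 z.2).const_mul (G0 z.1)).div ((dr z hz).pow 3) (by simp [h2.ne']))).congr_deriv ?_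
    simp only [hN2, Pi.pow_apply, Pi.mul_apply]
    push_cast
    field_simp
    ring
  have cN2 : ContinuousOn (fun z : ℝ × ℝ => N2 z.1 z.2) Z := by
    have cG : ContinuousOn (fun z : ℝ × ℝ => G0 z.1) Z := cG0.comp continuousOn_fst fun z hz => hz.1
    have a1 : ContinuousOn (fun z : ℝ × ℝ => q z.1 z.2) Z := cq.continuousOn
    have a2 : ContinuousOn (fun z : ℝ × ℝ => q1 z.1 z.2) Z := cq1.continuousOn
    have a3 : ContinuousOn (fun z : ℝ × ℝ => q2 z.1 z.2) Z := cq2.continuousOn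
    have a4 : ContinuousOn (fun z : ℝ × ℝ => p1 z.1 z.2) Z := cp1.continuousOn
    have a5 : ContinuousOn (fun z : ℝ × ℝ => p2 z.1 z.2) Z := cp2.continuousOn
    have a6 : ContinuousOn (fun z : ℝ × ℝ => r z.1 z.2) Z := cr.continuousOn
    have a7 : ContinuousOn (fun z : ℝ × ℝ => g (z.1 + z.2)) Z := by fun_prop
    have a8 : ContinuousOn (fun z : ℝ × ℝ => g1 (z.1 + z.2)) Z := by fun_prop
    have a9 : ContinuousOn (fun z : ℝ × ℝ => g2 (z.1 + z.2)) Z := by fun_prop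
    have n1 : ∀ z ∈ Z, q z.1 z.2 ≠ 0 := fun z hz => (hqpos z hz).ne'
    have n2 : ∀ z ∈ Z, r z.1 z.2 ≠ 0 := fun z hz => (hrpos z hz).ne'
    exact (((((a9.div a1 n1).sub (((a8.const_mul 2).mul a2).div (a1.pow 2) fun z hz => pow_ne_zero _ (n1 z hz))).sub
      ((a7.mul a3).div (a1.pow 2) fun z hz => pow_ne_zero _ (n1 z hz))).add
      (((a7.const_mul 2).mul (a2.pow 2)).div (a1.pow 3) fun z hz => pow_ne_zero _ (n1 z hz))).add
      ((cG.mul a5).div (a6.pow 3) fun z hz => pow_ne_zero _ (n2 z hz))).sub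
      (((cG.const_mul 3).mul (a4.pow 2)).div (a6.pow 5) fun z hz => pow_ne_zero _ (n2 z hz))
  obtain ⟨B1, hB1⟩ := hZc.exists_bound_of_continuousOn cN2
  obtain ⟨B2, hB2⟩ := hZc.exists_bound_of_continuousOn cq1.continuousOn
  obtain ⟨B3, hB3⟩ := (isCompact_Icc (a := -T) (b := T)).exists_bound_of_continuousOn cG0
  set B := |B1| + |B2| + |B3| with hB
  have hBn : 0 ≤ B := by positivity
  have hB1' : B1 ≤ B := by have := le_abs_self B1; have := abs_nonneg B2; have := abs_nonneg B3; linarith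
  have hB2' : B2 ≤ B := by have := le_abs_self B2; have := abs_nonneg B1; have := abs_nonneg B3; linarith
  have hB3' : B3 ≤ B := by have := le_abs_self B3; have := abs_nonneg B2; have := abs_nonneg B1; linarith
  set C := (B * (2 / ((L - T) * Real.sqrt (2 * (m / 3))) ^ 3) + (B + 2 * B / (m / 3) + (4 * B / (m / 3) + B * B * (L + T) / (m / 3) ^ 2))) with hC
  refine ⟨|C| + 1, by positivity, ?_⟩
  intro t₀ ht n hn
  have hmem : ∀ x ∈ Set.Icc 0 (L - t₀), (t₀, x) ∈ Z := fun x hx => ⟨ht, hx⟩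
  have slice : ∀ {f : ℝ × ℝ → ℝ}, ContinuousOn f Z → ContinuousOn (fun x => f (t₀, x)) (Set.Icc 0 (L - t₀)) := by
    intro f hf
    exact hf.comp (by fun_prop) hmem
  have hsφ : 0 < φ t₀ := by linarith [hφlow t₀ ht]
  have hss := Real.sqrt_pos.2 hsφ
  have hq0 : q t₀ 0 = φ t₀ := by simp [hqd, wavg_zero]
  have hp0 : 2 * p t₀ 0 = φ t₀ := by rw [hpd, wavg_zero, integral_w1]; ring
  have hq10 : q1 t₀ 0 = φ1 t₀ / 2 := by simp [hq1d, wavg_zero]; ring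
  have hp10 : p1 t₀ 0 = φ1 t₀ / 6 := by rw [hp1d, wavg_zero, integral_w2]; ring
  have hr0 : r t₀ 0 = Real.sqrt (φ t₀) := by simp only [hr, hp0]
  have hsq : Real.sqrt (φ t₀) ^ 2 = φ t₀ := Real.sq_sqrt hsφ.le
  have hF : ∀ x, HasDerivAt (fun x => μ (t₀ + x) - μ t₀ - v t₀ * x) (x * q t₀ x) x := by
    intro x
    have h := ((shift hμ t₀ x).sub_const (μ t₀)).sub ((hasDerivAt_id x).const_mul (v t₀))
    refine h.congr_deriv ?_
    rw [hqd, ← taylor_wavg1 hv cφ t₀ x]; ring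
  have key := half_stationary (n := n) (R := L - t₀) (r0 := L - T) (R0 := L + T) (m := m / 3) (B := B) (G0 := G0 t₀)
    (F := fun x => μ (t₀ + x) - μ t₀ - v t₀ * x) (p := p t₀) (q := q t₀) (q1 := q1 t₀) (g := fun x => g (t₀ + x))
    (N := N t₀) (N1 := N1 t₀) (N2 := N2 t₀) hn (by linarith) (by linarith [ht.2]) (by linarith [ht.1]) hm3 hBn
    ((hB3 t₀ ht).trans hB3') (fun x _ => hF x) (fun x _ => taylor_wavg2 hμ hv cφ t₀ x)
    (fun x hx => hplow _ (hmem x hx)) (slice cp.continuousOn) (fun x _ => dq t₀ x)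
    (fun x hx => hqlow _ (hmem x hx)) (fun x hx => (hB2 _ (hmem x hx)).trans hB2') (slice cq1.continuousOn)
    (fun x hx => dN _ (hmem x hx)) (fun x hx => dN1 _ (hmem x hx)) (fun x hx => (hB1 _ (hmem x hx)).trans hB1')
    (slice cN2) ?_ ?_
  · have hRq : ((L - t₀ : ℝ) : ℂ) * (q t₀ (L - t₀) : ℂ) = ((v L - v t₀ : ℝ) : ℂ) := by
      rw [← Complex.ofReal_mul, hqd, ← taylor_wavg1 hv cφ t₀ (L - t₀)]; congr 2; ring_nf
    have hN10 : N1 t₀ 0 = g1 t₀ / φ t₀ - g t₀ * φ1 t₀ / (3 * φ t₀ ^ 2) := by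
      simp only [hN1, hr0, hq0, hq10, hp10, hG0, add_zero]
      have e4 : Real.sqrt (φ t₀) ^ 4 = φ t₀ ^ 2 := by rw [← hsq]; ring_nf; rw [hsq]
      have : g t₀ / Real.sqrt (φ t₀) * (φ1 t₀ / 6) / Real.sqrt (φ t₀) ^ 3 = g t₀ * φ1 t₀ / (6 * φ t₀ ^ 2) := by
        rw [← e4]; field_simp
      rw [this]; field_simp; ring
    rw [hN10, hRq] at key
    have hshift : (∫ x in (0:ℝ)..(L - t₀), Complex.exp (Complex.I * (n * (μ (t₀ + x) - μ t₀ - v t₀ * x) : ℝ)) * (g (t₀ + x) : ℂ))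
        = ∫ t in t₀..L, Complex.exp (Complex.I * (n * (μ t - μ t₀ - v t₀ * (t - t₀)) : ℝ)) * (g t : ℂ) := by
      have := intervalIntegral.integral_comp_add_left (a := 0) (b := L - t₀)
        (fun t => Complex.exp (Complex.I * (n * (μ t - μ t₀ - v t₀ * (t - t₀)) : ℝ)) * (g t : ℂ)) t₀
      simp only [add_sub_cancel_left, add_zero, add_sub_cancel] at this
      exact this
    simp only [add_sub_cancel] at key
    rw [hshift] at key
    refine key.trans ?_
    have : 0 < n * Real.sqrt n := by positivity
    exact div_le_div_of_nonneg_right ((le_abs_self C).trans (le_add_of_nonneg_right zero_le_one)) this.le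
  · simp only [hN, hr0, hq0, hG0, add_zero]
    rw [div_div, ← sq, hsq, sub_self]
  · intro x hx
    have := (hqpos _ (hmem x hx))
    simp only at this
    simp only [hN, hr]
    field_simp
    ring

/-! ### The phase, its derivatives, and two-sided stationary phase -/

/-- The square root of `1 - c² cos² t`, i.e. `sin μ(t)` for `μ(t) = arccos (c cos t)`. -/
def rD (c t : ℝ) : ℝ := Real.sqrt (1 - c ^ 2 * Real.cos t ^ 2)

lemma rD_sq_pos {c s : ℝ} (hs : 0 < s) (h1 : c ^ 2 + s ^ 2 = 1) (t : ℝ) :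
    0 < 1 - c ^ 2 * Real.cos t ^ 2 := by
  nlinarith [Real.sin_sq_add_cos_sq t, mul_nonneg (sq_nonneg c) (sq_nonneg (Real.sin t)), pow_pos hs 2]

lemma rD_pos {c s : ℝ} (hs : 0 < s) (h1 : c ^ 2 + s ^ 2 = 1) (t : ℝ) : 0 < rD c t :=
  Real.sqrt_pos.2 (rD_sq_pos hs h1 t)

lemma rD_sq {c s : ℝ} (hs : 0 < s) (h1 : c ^ 2 + s ^ 2 = 1) (t : ℝ) :
    rD c t ^ 2 = 1 - c ^ 2 * Real.cos t ^ 2 := Real.sq_sqrt (rD_sq_pos hs h1 t).le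

lemma rD_le_one {c : ℝ} (t : ℝ) : rD c t ≤ 1 := by
  refine Real.sqrt_le_iff.2 ⟨zero_le_one, ?_⟩
  nlinarith [mul_nonneg (sq_nonneg c) (sq_nonneg (Real.cos t))]

lemma hasDerivAt_rD {c s : ℝ} (hs : 0 < s) (h1 : c ^ 2 + s ^ 2 = 1) (t : ℝ) :
    HasDerivAt (rD c) (c ^ 2 * Real.cos t * Real.sin t / rD c t) t := by
  have h := ((((Real.hasDerivAt_cos t).pow 2).const_mul (c ^ 2)).const_sub 1).sqrt (rD_sq_pos hs h1 t).ne'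
  refine h.congr_deriv ?_
  simp only [Pi.pow_apply]
  change _ / (2 * rD c t) = _
  have := rD_pos hs h1 t
  push_cast
  field_simp

lemma abs_mul_cos_lt {c s : ℝ} (hs : 0 < s) (h1 : c ^ 2 + s ^ 2 = 1) (t : ℝ) :
    |c * Real.cos t| < 1 := by
  rw [← sq_lt_one_iff_abs_lt_one]
  have := rD_sq_pos hs h1 t
  nlinarith

lemma hasDerivAt_mu {c s : ℝ} (hs : 0 < s) (h1 : c ^ 2 + s ^ 2 = 1) (t : ℝ) :
    HasDerivAt (fun t => Real.arccos (c * Real.cos t)) (c * Real.sin t / rD c t) t := by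
  have hb := abs_lt.1 (abs_mul_cos_lt hs h1 t)
  have h := (Real.hasDerivAt_arccos hb.1.ne' hb.2.ne).comp t ((Real.hasDerivAt_cos t).const_mul c)
  refine h.congr_deriv ?_
  rw [rD, mul_pow]
  ring

lemma hasDerivAt_v {c s : ℝ} (hs : 0 < s) (h1 : c ^ 2 + s ^ 2 = 1) (t : ℝ) :
    HasDerivAt (fun t => c * Real.sin t / rD c t) (c * s ^ 2 * Real.cos t / rD c t ^ 3) t := by
  have hr := rD_pos hs h1 t
  refine (((Real.hasDerivAt_sin t).const_mul c).div (hasDerivAt_rD hs h1 t) hr.ne').congr_deriv ?_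
  field_simp
  rw [rD_sq hs h1]
  linear_combination c * Real.cos t * (-h1 + c ^ 2 * (-1) * Real.sin_sq_add_cos_sq t)

lemma hasDerivAt_phi {c s : ℝ} (hs : 0 < s) (h1 : c ^ 2 + s ^ 2 = 1) (t : ℝ) :
    HasDerivAt (fun t => c * s ^ 2 * Real.cos t / rD c t ^ 3)
      (-c * s ^ 2 * (Real.sin t / rD c t ^ 3 + 3 * c ^ 2 * (Real.cos t ^ 2 * Real.sin t) / rD c t ^ 5)) t := by
  have hr := rD_pos hs h1 t
  refine (((Real.hasDerivAt_cos t).const_mul (c * s ^ 2)).div ((hasDerivAt_rD hs h1 t).pow 3)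
    (by simp [hr.ne'])).congr_deriv ?_
  simp only [Pi.pow_apply]
  push_cast
  field_simp
  ring

lemma hasDerivAt_phi1 {c s : ℝ} (hs : 0 < s) (h1 : c ^ 2 + s ^ 2 = 1) (t : ℝ) :
    HasDerivAt (fun t => -c * s ^ 2 * (Real.sin t / rD c t ^ 3
        + 3 * c ^ 2 * (Real.cos t ^ 2 * Real.sin t) / rD c t ^ 5))
      (-c * s ^ 2 * (Real.cos t / rD c t ^ 3 - 3 * c ^ 2 * Real.cos t * Real.sin t ^ 2 / rD c t ^ 5
        + 3 * c ^ 2 * (Real.cos t ^ 3 - 2 * Real.cos t * Real.sin t ^ 2) / rD c t ^ 5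
        - 15 * c ^ 4 * Real.cos t ^ 3 * Real.sin t ^ 2 / rD c t ^ 7)) t := by
  have hr := rD_pos hs h1 t
  refine ((((Real.hasDerivAt_sin t).div ((hasDerivAt_rD hs h1 t).pow 3) (by simp [hr.ne'])).add
    (((((Real.hasDerivAt_cos t).pow 2).mul (Real.hasDerivAt_sin t)).const_mul (3 * c ^ 2)).div
      ((hasDerivAt_rD hs h1 t).pow 5) (by simp [hr.ne']))).const_mul (-c * s ^ 2)).congr_deriv ?_
  simp only [Pi.pow_apply, Pi.mul_apply]
  push_cast
  field_simp
  ring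

lemma hasDerivAt_g {c s : ℝ} (hs : 0 < s) (h1 : c ^ 2 + s ^ 2 = 1) (t : ℝ) :
    HasDerivAt (fun t => Real.cos t / rD c t) (-Real.sin t / rD c t ^ 3) t := by
  have hr := rD_pos hs h1 t
  refine ((Real.hasDerivAt_cos t).div (hasDerivAt_rD hs h1 t) hr.ne').congr_deriv ?_
  field_simp
  rw [rD_sq hs h1]
  ring

lemma hasDerivAt_g1 {c s : ℝ} (hs : 0 < s) (h1 : c ^ 2 + s ^ 2 = 1) (t : ℝ) :
    HasDerivAt (fun t => -Real.sin t / rD c t ^ 3)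
      (-Real.cos t / rD c t ^ 3 + 3 * c ^ 2 * Real.cos t * Real.sin t ^ 2 / rD c t ^ 5) t := by
  have hr := rD_pos hs h1 t
  refine ((Real.hasDerivAt_sin t).neg.div ((hasDerivAt_rD hs h1 t).pow 3) (by simp [hr.ne'])).congr_deriv ?_
  simp only [Pi.pow_apply, Pi.neg_apply]
  push_cast
  field_simp
  ring

lemma continuous_rD (c : ℝ) : Continuous (rD c) := by unfold rD; fun_prop

lemma rD_neg (c t : ℝ) : rD c (-t) = rD c t := by simp [rD]

/-- Two-sided stationary phase for an even phase `μ` and an even amplitude `g` on `[-L, L]`.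
The `1 / n` contributions of the stationary point from the two sides are odd in `t₀`
and cancel, so only the endpoint terms remain at that order. -/
lemma two_sided {μ v φ φ1 φ2 g g1 g2 : ℝ → ℝ}
    (hμ : ∀ t, HasDerivAt μ (v t) t) (hv : ∀ t, HasDerivAt v (φ t) t)
    (hφ : ∀ t, HasDerivAt φ (φ1 t) t) (hφ1 : ∀ t, HasDerivAt φ1 (φ2 t) t) (hφ2 : Continuous φ2)
    (hg : ∀ t, HasDerivAt g (g1 t) t) (hg1 : ∀ t, HasDerivAt g1 (g2 t) t) (hg2 : Continuous g2)
    (eμ : ∀ t, μ (-t) = μ t) (ev : ∀ t, v (-t) = -v t) (eφ : ∀ t, φ (-t) = φ t)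
    (eφ1 : ∀ t, φ1 (-t) = -φ1 t) (eg : ∀ t, g (-t) = g t) (eg1 : ∀ t, g1 (-t) = -g1 t)
    {L T m : ℝ} (hT : T < L) (hm : 0 < m)
    (hlow : ∀ t₀ ∈ Set.Icc (-T) T, ∀ x ∈ Set.Icc 0 (L - t₀), ∀ u ∈ Set.Icc (0:ℝ) 1,
      (1 - u) * m ≤ φ (t₀ + u * x)) :
    ∃ C : ℝ, 0 < C ∧ ∀ t₀ ∈ Set.Icc (-T) T, ∀ n : ℝ, 1 ≤ n →
      ‖(∫ t in (-L)..L, Complex.exp (Complex.I * (n * μ t - n * v t₀ * t : ℝ)) * (g t : ℂ)) -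
      (((g t₀ / Real.sqrt (φ t₀) * Real.sqrt (2 * Real.pi / n) : ℝ) : ℂ)
          * Complex.exp (Complex.I * (n * (μ t₀ - v t₀ * t₀) + Real.pi / 4 : ℝ))
       + (Complex.exp (Complex.I * (n * μ L - n * v t₀ * L : ℝ)) * g L / (Complex.I * n * ((v L - v t₀ : ℝ) : ℂ))
       + Complex.exp (Complex.I * (n * μ L + n * v t₀ * L : ℝ)) * g L / (Complex.I * n * ((v L + v t₀ : ℝ) : ℂ))))‖
        ≤ C / (n * Real.sqrt n) := by
  obtain ⟨C, hC, H⟩ := uniform_half hμ hv hφ hφ1 hφ2 hg hg1 hg2 hT hm hlow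
  refine ⟨2 * C, by positivity, fun t₀ ht n hn => ?_⟩
  have h1 := H t₀ ht n hn
  have h2 := H (-t₀) ⟨by linarith [ht.2], by linarith [ht.1]⟩ n hn
  have cμ : Continuous μ := continuous_iff_continuousAt.2 fun t => (hμ t).continuousAt
  have cg : Continuous g := continuous_iff_continuousAt.2 fun t => (hg t).continuousAt
  set f : ℝ → ℂ := fun t => Complex.exp (Complex.I * (n * (μ t - μ t₀ - v t₀ * (t - t₀)) : ℝ)) * (g t : ℂ) with hf
  have cf : Continuous f := by
    simp only [hf]
    fun_prop
  have hleft : (∫ t in (-t₀)..L, Complex.exp (Complex.I * (n * (μ t - μ (-t₀) - v (-t₀) * (t - -t₀)) : ℝ)) * (g t : ℂ))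
      = ∫ t in (-L)..t₀, f t := by
    have := intervalIntegral.integral_comp_neg (a := -t₀) (b := L) f
    rw [neg_neg] at this
    rw [← this]
    refine intervalIntegral.integral_congr fun t _ => ?_
    simp only [hf, eμ, ev, eg]
    ring_nf
  rw [hleft] at h2
  have hsum : (∫ t in (-L)..t₀, f t) + (∫ t in t₀..L, f t) = ∫ t in (-L)..L, f t :=
    intervalIntegral.integral_add_adjacent_intervals (cf.intervalIntegrable _ _) (cf.intervalIntegrable _ _)
  set w : ℂ := Complex.exp (Complex.I * (n * (μ t₀ - v t₀ * t₀) : ℝ)) with hw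
  have hwn : ‖w‖ = 1 := by rw [hw, mul_comm]; exact Complex.norm_exp_ofReal_mul_I _
  have hInteg : (∫ t in (-L)..L, Complex.exp (Complex.I * (n * μ t - n * v t₀ * t : ℝ)) * (g t : ℂ))
      = w * ∫ t in (-L)..L, f t := by
    rw [← intervalIntegral.integral_const_mul]
    refine intervalIntegral.integral_congr fun t _ => ?_
    simp only [hf, hw]
    rw [← mul_assoc, ← Complex.exp_add]
    congr 2
    push_cast
    ring
  have e1 : Complex.exp (Complex.I * (n * (μ t₀ - v t₀ * t₀) + Real.pi / 4 : ℝ))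
      = w * Complex.exp (Complex.I * (Real.pi / 4 : ℝ)) := by
    rw [hw, ← Complex.exp_add]; congr 1; push_cast; ring
  have e2 : Complex.exp (Complex.I * (n * μ L - n * v t₀ * L : ℝ))
      = w * Complex.exp (Complex.I * (n * (μ L - μ t₀ - v t₀ * (L - t₀)) : ℝ)) := by
    rw [hw, ← Complex.exp_add]; congr 1; push_cast; ring
  have e3 : Complex.exp (Complex.I * (n * μ L + n * v t₀ * L : ℝ))
      = w * Complex.exp (Complex.I * (n * (μ L - μ (-t₀) - v (-t₀) * (L - -t₀)) : ℝ)) := by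
    rw [hw, ← Complex.exp_add, eμ, ev]; congr 1; push_cast; ring
  rw [hInteg, e1, e2, e3, ← hsum]
  have h3 := norm_add_le_of_le h1 h2
  have h4 : 2 * C / (n * Real.sqrt n) = C / (n * Real.sqrt n) + C / (n * Real.sqrt n) := by ring
  rw [h4]
  refine le_trans (le_of_eq ?_) h3
  rw [← one_mul ‖_ + _‖, ← hwn, ← norm_mul]
  congr 1
  rw [eφ, eg, eg1, eφ1, ev, eμ]
  push_cast
  ring

/-! ### The stationary point and the two oscillatory integrals -/

/-- The sine of the stationary point belonging to the velocity `ξ`. -/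
def sig (c s ξ : ℝ) : ℝ := s * ξ / (c * Real.sqrt (1 - ξ ^ 2))

lemma sq_lt_of_abs {c ξ : ℝ} (hξ : |ξ| < c) : ξ ^ 2 < c ^ 2 := sq_lt_sq' (abs_lt.1 hξ).1 (abs_lt.1 hξ).2

/-- Trigonometry at the stationary point `t₀ = arcsin (sig c s ξ)`. -/
lemma stat_point {c s ξ : ℝ} (hc : 0 < c) (hs : 0 < s) (h1 : c ^ 2 + s ^ 2 = 1) (hξ : |ξ| < c) :
    Real.sin (Real.arcsin (sig c s ξ)) = sig c s ξ ∧
    Real.cos (Real.arcsin (sig c s ξ)) = Real.sqrt (c ^ 2 - ξ ^ 2) / (c * Real.sqrt (1 - ξ ^ 2)) ∧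
    rD c (Real.arcsin (sig c s ξ)) = s / Real.sqrt (1 - ξ ^ 2) ∧ sig c s ξ ^ 2 < 1 := by
  have hξ2 := sq_lt_of_abs hξ
  have hs2 : 0 < s ^ 2 := by positivity
  have hp : 0 < 1 - ξ ^ 2 := by nlinarith
  have hq : 0 < c ^ 2 - ξ ^ 2 := by linarith
  have hw := Real.sqrt_pos.2 hp
  have hww := Real.sq_sqrt hp.le
  have hz := Real.sqrt_pos.2 hq
  have hzz := Real.sq_sqrt hq.le
  have hsq : 1 - sig c s ξ ^ 2 = (c ^ 2 - ξ ^ 2) / (c ^ 2 * (1 - ξ ^ 2)) := by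
    rw [sig, div_pow, mul_pow, mul_pow, hww]
    field_simp
    linear_combination (-ξ ^ 2) * h1
  have hlt : sig c s ξ ^ 2 < 1 := by
    have : 0 < (c ^ 2 - ξ ^ 2) / (c ^ 2 * (1 - ξ ^ 2)) := by positivity
    linarith
  have hcos : Real.cos (Real.arcsin (sig c s ξ)) = Real.sqrt (c ^ 2 - ξ ^ 2) / (c * Real.sqrt (1 - ξ ^ 2)) := by
    rw [Real.cos_arcsin, hsq, Real.sqrt_div hq.le, Real.sqrt_mul (sq_nonneg c), Real.sqrt_sq hc.le]
  have habs := abs_lt.1 ((sq_lt_one_iff_abs_lt_one _).1 hlt)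
  refine ⟨Real.sin_arcsin habs.1.le habs.2.le, hcos, ?_, hlt⟩
  rw [rD, hcos, div_pow, hzz, mul_pow, hww]
  have : 1 - c ^ 2 * ((c ^ 2 - ξ ^ 2) / (c ^ 2 * (1 - ξ ^ 2))) = s ^ 2 / (1 - ξ ^ 2) := by
    field_simp
    linear_combination -h1
  rw [this, Real.sqrt_div (sq_nonneg s), Real.sqrt_sq hs.le]

/-- The point `arcsin (sig c s ξ)` is stationary for the phase `μ(t) - ξ t`. -/
lemma stat_v {c s ξ : ℝ} (hc : 0 < c) (hs : 0 < s) (h1 : c ^ 2 + s ^ 2 = 1) (hξ : |ξ| < c) :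
    c * Real.sin (Real.arcsin (sig c s ξ)) / rD c (Real.arcsin (sig c s ξ)) = ξ := by
  obtain ⟨e1, -, e3, -⟩ := stat_point hc hs h1 hξ
  have hξ2 := sq_lt_of_abs hξ
  have hp : 0 < 1 - ξ ^ 2 := by nlinarith [pow_pos hs 2]
  have hw := Real.sqrt_pos.2 hp
  rw [e3, e1, sig]
  field_simp

/-- The second derivative of `μ` at the stationary point. -/
lemma stat_phi {c s ξ : ℝ} (hc : 0 < c) (hs : 0 < s) (h1 : c ^ 2 + s ^ 2 = 1) (hξ : |ξ| < c) :
    c * s ^ 2 * Real.cos (Real.arcsin (sig c s ξ)) / rD c (Real.arcsin (sig c s ξ)) ^ 3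
      = (1 - ξ ^ 2) * Real.sqrt (c ^ 2 - ξ ^ 2) / s := by
  obtain ⟨-, e2, e3, -⟩ := stat_point hc hs h1 hξ
  have hξ2 := sq_lt_of_abs hξ
  have hp : 0 < 1 - ξ ^ 2 := by nlinarith [pow_pos hs 2]
  have hw := Real.sqrt_pos.2 hp
  rw [e3, e2]
  nth_rewrite 3 [← Real.sq_sqrt hp.le]
  field_simp

lemma stat_g {c s ξ : ℝ} (hc : 0 < c) (hs : 0 < s) (h1 : c ^ 2 + s ^ 2 = 1) (hξ : |ξ| < c) :
    Real.cos (Real.arcsin (sig c s ξ)) / rD c (Real.arcsin (sig c s ξ))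
      = Real.sqrt (c ^ 2 - ξ ^ 2) / (c * s) := by
  obtain ⟨-, e2, e3, -⟩ := stat_point hc hs h1 hξ
  have hξ2 := sq_lt_of_abs hξ
  have hp : 0 < 1 - ξ ^ 2 := by nlinarith [pow_pos hs 2]
  have hw := Real.sqrt_pos.2 hp
  rw [e3, e2]
  field_simp

/-- The stationary points of all velocities `|ξ| ≤ α` lie in one compact subinterval of `(-π/2, π/2)`. -/
lemma stat_mem {c s α ξ : ℝ} (hc : 0 < c) (hs : 0 < s) (h1 : c ^ 2 + s ^ 2 = 1) (hα : α < c) (hξ : |ξ| ≤ α) :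
    Real.arcsin (sig c s ξ) ∈ Set.Icc (-Real.arcsin (sig c s α)) (Real.arcsin (sig c s α)) := by
  have hα0 : 0 ≤ α := (abs_nonneg ξ).trans hξ
  have hp : 0 < 1 - α ^ 2 := by nlinarith [pow_pos hs 2]
  have hle : |sig c s ξ| ≤ sig c s α := by
    rw [sig, sig, abs_div, abs_mul, abs_of_pos hs, abs_of_nonneg (a := c * _) (by positivity)]
    have : α ^ 2 ≥ ξ ^ 2 := sq_le_sq.2 (by rwa [abs_of_nonneg hα0])
    have := Real.sqrt_pos.2 hp
    gcongr
  have := abs_le.1 hle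
  rw [← Real.arcsin_neg]
  exact ⟨Real.monotone_arcsin this.1, Real.monotone_arcsin this.2⟩

/-- A lower bound for the second derivative of `μ` on `[t₀, π/2]`, from the concavity of the cosine.
The factor `1 - u` accounts for its zero at `π/2`. -/
lemma phi_low {c s T : ℝ} (hc : 0 < c) (hs : 0 < s) (h1 : c ^ 2 + s ^ 2 = 1) (hT0 : 0 ≤ T) (hT : T < Real.pi / 2) :
    ∀ t₀ ∈ Set.Icc (-T) T, ∀ x ∈ Set.Icc 0 (Real.pi / 2 - t₀), ∀ u ∈ Set.Icc (0:ℝ) 1,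
      (1 - u) * (c * s ^ 2 * Real.cos T) ≤
        c * s ^ 2 * Real.cos (t₀ + u * x) / rD c (t₀ + u * x) ^ 3 := by
  intro t₀ ht x hx u hu
  have hx2 : t₀ + x ∈ Set.Icc (-(Real.pi / 2)) (Real.pi / 2) := ⟨by linarith [ht.1, hx.1], by linarith [hx.2]⟩
  have ht2 : t₀ ∈ Set.Icc (-(Real.pi / 2)) (Real.pi / 2) := ⟨by linarith [ht.1, hx.1], by linarith [ht.2]⟩
  have hconc := strictConcaveOn_cos_Icc.concaveOn.2 ht2 hx2 (sub_nonneg.2 hu.2) hu.1 (sub_add_cancel 1 u)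
  simp only [smul_eq_mul] at hconc
  have e : (1 - u) * t₀ + u * (t₀ + x) = t₀ + u * x := by ring
  rw [e] at hconc
  have hcx := Real.cos_nonneg_of_mem_Icc hx2
  have hct : Real.cos T ≤ Real.cos t₀ := by
    rw [← Real.cos_abs t₀]
    exact Real.cos_le_cos_of_nonneg_of_le_pi (abs_nonneg _) (by linarith) (abs_le.2 ht)
  have hcT : 0 ≤ Real.cos T := Real.cos_nonneg_of_neg_pi_div_two_le_of_le (by linarith) hT.le
  have hu' : 0 ≤ 1 - u := by linarith [hu.2]
  have hle : (1 - u) * Real.cos T ≤ Real.cos (t₀ + u * x) :=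
    (mul_le_mul_of_nonneg_left hct hu').trans (by nlinarith [mul_nonneg hu.1 hcx])
  have hr := rD_pos hs h1 (t₀ + u * x)
  have hr1 : rD c (t₀ + u * x) ^ 3 ≤ 1 := pow_le_one₀ hr.le (rD_le_one _)
  rw [le_div_iff₀ (by positivity)]
  have h0 : 0 ≤ (1 - u) * (c * s ^ 2 * Real.cos T) := by positivity
  calc _ ≤ (1 - u) * (c * s ^ 2 * Real.cos T) * 1 := mul_le_mul_of_nonneg_left hr1 h0
    _ = c * s ^ 2 * ((1 - u) * Real.cos T) := by ring
    _ ≤ _ := mul_le_mul_of_nonneg_left hle (by positivity)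

/-- The first of the two oscillatory integrals describing the walk (for `n + y` even). -/
def intK (c : ℝ) (n : ℕ) (y : ℤ) : ℝ :=
  1 / Real.pi * ∫ t in (-(Real.pi / 2))..(Real.pi / 2), Real.cos (n * Real.arccos (c * Real.cos t) - y * t)

/-- The second of the two oscillatory integrals describing the walk (for `n + y` even). -/
def intM (c : ℝ) (n : ℕ) (y : ℤ) : ℝ :=
  1 / Real.pi * ∫ t in (-(Real.pi / 2))..(Real.pi / 2),
    Real.sin (n * Real.arccos (c * Real.cos t) - y * t) * (Real.cos t / rD c t)

lemma scaled_error {X G S P e : ℝ} (hP : 0 < P) (h : |X - S * P * G| ≤ e) :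
    ∃ d, |d| ≤ e / P ∧ X = P * (S * G + d) := by
  refine ⟨X / P - S * G, ?_, by field_simp; ring⟩
  have : X / P - S * G = (X - S * P * G) / P := by field_simp
  rw [this, abs_div, abs_of_pos hP]
  exact div_le_div_of_nonneg_right h hP.le

/-- At the endpoints `±π/2` the phase factor is real when `n + y` is even. -/
lemma exp_parity (n : ℕ) (y : ℤ) (h : Even ((n : ℤ) + y)) :
    (∃ r : ℝ, Complex.exp (Complex.I * (n * (Real.pi / 2) - y * (Real.pi / 2) : ℝ)) = (r : ℂ)) ∧
    (∃ r : ℝ, Complex.exp (Complex.I * (n * (Real.pi / 2) + y * (Real.pi / 2) : ℝ)) = (r : ℂ)) := by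
  obtain ⟨k, hk⟩ := h
  have hy : (y : ℝ) = k + k - n := by
    have : y = k + k - n := by linarith
    rw [this]; push_cast; ring
  have key : ∀ j : ℤ, ∃ r : ℝ, Complex.exp (Complex.I * ((j : ℝ) * Real.pi : ℝ)) = (r : ℂ) := by
    intro j
    refine ⟨(Complex.exp (Complex.I * ((j : ℝ) * Real.pi : ℝ))).re, ?_⟩
    apply Complex.ext
    · simp
    · rw [mul_comm, Complex.exp_ofReal_mul_I_im]; simp [Real.sin_int_mul_pi]
  constructor
  · obtain ⟨r, hr⟩ := key (n - k)
    refine ⟨r, hr ▸ ?_⟩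
    congr 3; rw [hy]; push_cast; ring
  · obtain ⟨r, hr⟩ := key k
    refine ⟨r, hr ▸ ?_⟩
    congr 3; rw [hy]; ring

set_option maxHeartbeats 1000000 in
/-- Stationary phase asymptotics of the two integrals, uniformly in `|y| ≤ α n` with `n + y` even. -/
lemma KM_asymp {c s α : ℝ} (hc : 0 < c) (hs : 0 < s) (h1 : c ^ 2 + s ^ 2 = 1) (hα0 : 0 < α) (hα : α < c) :
    ∃ C : ℝ, 0 < C ∧ ∀ n : ℕ, 0 < n → ∀ y : ℤ, ∀ ξ : ℝ, ξ = (y : ℝ) / n → |ξ| ≤ α → Even ((n : ℤ) + y) →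
      ∃ e1 e2 : ℝ, |e1| ≤ C / n ∧ |e2| ≤ C / n ∧
      intK c n y = Real.sqrt (2 * s / (Real.pi * n * (1 - ξ ^ 2) * Real.sqrt (c ^ 2 - ξ ^ 2))) *
        (Real.cos (n * (Real.arccos (c * Real.cos (Real.arcsin (sig c s ξ))) - ξ * Real.arcsin (sig c s ξ))
          + Real.pi / 4) + e1) ∧
      intM c n y = Real.sqrt (2 * s / (Real.pi * n * (1 - ξ ^ 2) * Real.sqrt (c ^ 2 - ξ ^ 2))) *
        (Real.sqrt (c ^ 2 - ξ ^ 2) / (c * s) *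
         Real.sin (n * (Real.arccos (c * Real.cos (Real.arcsin (sig c s ξ))) - ξ * Real.arcsin (sig c s ξ))
          + Real.pi / 4) + e2) := by
  have hαabs : |α| < c := by rwa [abs_of_pos hα0]
  have hσ0 : 0 ≤ sig c s α := by unfold sig; positivity
  have hT0 : 0 ≤ Real.arcsin (sig c s α) := Real.arcsin_nonneg.2 hσ0
  have hσ1 : sig c s α < 1 := by nlinarith [(stat_point hc hs h1 hαabs).2.2.2]
  have hT : Real.arcsin (sig c s α) < Real.pi / 2 := Real.arcsin_lt_pi_div_two.2 hσ1
  have hm : 0 < c * s ^ 2 * Real.cos (Real.arcsin (sig c s α)) := by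
    have := Real.cos_pos_of_mem_Ioo ⟨by linarith [Real.pi_pos], hT⟩
    positivity
  have crD := continuous_rD c
  have rne : ∀ k t, rD c t ^ k ≠ 0 := fun k t => pow_ne_zero k (rD_pos hs h1 t).ne'
  have hφ2 : Continuous fun t => (-c * s ^ 2 * (Real.cos t / rD c t ^ 3 - 3 * c ^ 2 * Real.cos t * Real.sin t ^ 2 / rD c t ^ 5
        + 3 * c ^ 2 * (Real.cos t ^ 3 - 2 * Real.cos t * Real.sin t ^ 2) / rD c t ^ 5
        - 15 * c ^ 4 * Real.cos t ^ 3 * Real.sin t ^ 2 / rD c t ^ 7)) := by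
    have := rne 3
    have := rne 5
    have := rne 7
    fun_prop (disch := assumption)
  have hg2 : Continuous fun t => -Real.cos t / rD c t ^ 3 + 3 * c ^ 2 * Real.cos t * Real.sin t ^ 2 / rD c t ^ 5 := by
    have := rne 3
    have := rne 5
    fun_prop (disch := assumption)
  obtain ⟨C1, hC1, H1⟩ := two_sided (g := fun _ => 1) (g1 := fun _ => 0) (g2 := fun _ => 0)
    (hasDerivAt_mu hs h1) (hasDerivAt_v hs h1) (hasDerivAt_phi hs h1) (hasDerivAt_phi1 hs h1) hφ2
    (fun t => hasDerivAt_const t _) (fun t => hasDerivAt_const t _) continuous_const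
    (fun t => by simp) (fun t => by simp [rD_neg, neg_div]) (fun t => by simp [rD_neg])
    (fun t => by simp only [rD_neg, Real.sin_neg, Real.cos_neg]; ring) (fun t => rfl) (fun t => by simp) hT hm
    (phi_low hc hs h1 hT0 hT)
  obtain ⟨C2, hC2, H2⟩ := two_sided
    (hasDerivAt_mu hs h1) (hasDerivAt_v hs h1) (hasDerivAt_phi hs h1) (hasDerivAt_phi1 hs h1) hφ2
    (hasDerivAt_g hs h1) (hasDerivAt_g1 hs h1) hg2
    (fun t => by simp) (fun t => by simp [rD_neg, neg_div]) (fun t => by simp [rD_neg])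
    (fun t => by simp only [rD_neg, Real.sin_neg, Real.cos_neg]; ring) (fun t => by simp [rD_neg])
    (fun t => by simp only [rD_neg, Real.sin_neg]; ring) hT hm
    (phi_low hc hs h1 hT0 hT)
  refine ⟨(C1 + C2) / s, by positivity, ?_⟩
  intro n hn y ξ hξ hξα hpar
  have hξc : |ξ| < c := hξα.trans_lt hα
  have hn1 : (1 : ℝ) ≤ n := by exact_mod_cast hn
  have hn0 : (0 : ℝ) < n := by linarith
  have hy : (y : ℝ) = n * ξ := by rw [hξ]; field_simp
  have hmem := stat_mem hc hs h1 hα hξα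
  have K1 := H1 _ hmem n hn1
  have K2 := H2 _ hmem n hn1
  have hrpi : rD c (Real.pi / 2) = 1 := by simp [rD]
  simp only [stat_v hc hs h1 hξc, stat_phi hc hs h1 hξc, stat_g hc hs h1 hξc, ← hy] at K1 K2
  simp only [Real.cos_pi_div_two, mul_zero, Real.arccos_zero, zero_div, Complex.ofReal_zero,
    add_zero, Complex.ofReal_one, mul_one] at K1 K2
  set β := (n * (Real.arccos (c * Real.cos (Real.arcsin (sig c s ξ))) - ξ * Real.arcsin (sig c s ξ))
          + Real.pi / 4) with hβ
  have hp : 0 < 1 - ξ ^ 2 := by nlinarith [sq_lt_of_abs hξc, pow_pos hs 2]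
  have hq := Real.sqrt_pos.2 (sub_pos.2 (sq_lt_of_abs hξc))
  set z := Real.sqrt (c ^ 2 - ξ ^ 2) with hz
  have hz1 : z ≤ 1 := by
    rw [hz]; refine Real.sqrt_le_iff.2 ⟨zero_le_one, ?_⟩; nlinarith [sq_nonneg ξ, pow_pos hs 2]
  set P := Real.sqrt (2 * s / (Real.pi * n * (1 - ξ ^ 2) * z)) with hP
  have hpi := Real.pi_pos
  have hPpos : 0 < P := Real.sqrt_pos.2 (by positivity)
  have hφs : 1 / Real.sqrt ((1 - ξ ^ 2) * z / s) * Real.sqrt (2 * Real.pi / n) = Real.pi * P := by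
    rw [hP, one_div, ← Real.sqrt_inv, ← Real.sqrt_mul (by positivity)]
    nth_rewrite 2 [← Real.sqrt_sq hpi.le]
    rw [← Real.sqrt_mul (by positivity)]
    congr 1
    field_simp
  have hφs2 : z / (c * s) / Real.sqrt ((1 - ξ ^ 2) * z / s) * Real.sqrt (2 * Real.pi / n)
      = z / (c * s) * (Real.pi * P) := by rw [← hφs]; ring
  rw [hφs] at K1
  rw [hφs2] at K2
  have hPlow : s / Real.sqrt n ≤ Real.pi * P := by
    rw [hP]
    nth_rewrite 1 [← Real.sqrt_sq hs.le]
    nth_rewrite 1 [← Real.sqrt_sq hpi.le]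
    rw [← Real.sqrt_div (sq_nonneg s), ← Real.sqrt_mul (by positivity)]
    refine Real.sqrt_le_sqrt ?_
    have e : Real.pi ^ 2 * (2 * s / (Real.pi * n * (1 - ξ ^ 2) * z)) = (2 * Real.pi * s / ((1 - ξ ^ 2) * z)) / n := by
      field_simp
    rw [e]
    refine div_le_div_of_nonneg_right ?_ hn0.le
    rw [le_div_iff₀ (by positivity)]
    have hs1 : s ≤ 1 := by nlinarith [pow_pos hc 2]
    have : (1 - ξ ^ 2) * z ≤ 1 := by nlinarith [sq_nonneg ξ]
    have h3 : s ^ 2 * ((1 - ξ ^ 2) * z) ≤ s ^ 2 * 1 := mul_le_mul_of_nonneg_left this (sq_nonneg s)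
    have h4 : s ^ 2 * 1 ≤ 2 * Real.pi * s := by
      have := mul_le_mul_of_nonneg_left hs1 hs.le
      have := mul_lt_mul_of_pos_right Real.pi_gt_three hs
      rw [mul_one, sq]
      linarith
    exact h3.trans h4
  have herr : ∀ C : ℝ, 0 < C → C / (n * Real.sqrt n) / (Real.pi * P) ≤ C / s / n := by
    intro C hC
    have hsn := Real.sqrt_pos.2 hn0
    calc C / (n * Real.sqrt n) / (Real.pi * P) ≤ C / (n * Real.sqrt n) / (s / Real.sqrt n) := by
          refine div_le_div_of_nonneg_left (by positivity) (by positivity) hPlow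
      _ = C / s / n := by field_simp
  have cμ : Continuous fun t => Real.arccos (c * Real.cos t) := by fun_prop
  -- the endpoint terms are purely imaginary since `n + y` is even, so they drop out of the real part
  have A1 : |Real.pi * intK c n y - 1 * (Real.pi * P) * Real.cos β| ≤ C1 / (n * Real.sqrt n) := by
    refine le_trans ?_ K1
    refine le_trans (le_of_eq ?_) (Complex.abs_re_le_norm _)
    congr 1
    obtain ⟨⟨r1, hr1⟩, ⟨r2, hr2⟩⟩ := exp_parity n y hpar
    rw [hr1, hr2, Complex.sub_re, Complex.add_re, Complex.add_re]
    have hre : (∫ t in (-(Real.pi / 2))..(Real.pi / 2),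
        Complex.exp (Complex.I * ((n * Real.arccos (c * Real.cos t) - y * t : ℝ) : ℂ))).re = Real.pi * intK c n y := by
      have := Complex.reCLM.intervalIntegral_comp_comm (a := -(Real.pi / 2)) (b := Real.pi / 2) (μ := volume)
        (f := fun t => Complex.exp (Complex.I * ((n * Real.arccos (c * Real.cos t) - y * t : ℝ) : ℂ)))
        (Continuous.intervalIntegrable (by fun_prop) _ _)
      simp only [Complex.reCLM_apply] at this
      rw [← this, intK, ← mul_assoc, mul_one_div_cancel hpi.ne', one_mul]
      refine intervalIntegral.integral_congr fun t _ => ?_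
      rw [mul_comm Complex.I, Complex.exp_ofReal_mul_I_re]
    rw [hre, Complex.re_ofReal_mul, mul_comm Complex.I (β : ℂ), Complex.exp_ofReal_mul_I_re]
    have hz0 : ∀ r w : ℝ, ((r : ℂ) / (Complex.I * ((n : ℝ) : ℂ) * (w : ℂ))).re = 0 := by
      intro r w
      have : (r : ℂ) / (Complex.I * ((n : ℝ) : ℂ) * (w : ℂ)) = ((-(r / (n * w)) : ℝ) : ℂ) * Complex.I := by
        rw [mul_assoc, mul_comm Complex.I, ← div_div, Complex.div_I]; push_cast; ring
      rw [this, Complex.re_ofReal_mul, Complex.I_re, mul_zero]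
    rw [hz0, hz0]
    ring
  have A2 : |Real.pi * intM c n y - z / (c * s) * (Real.pi * P) * Real.sin β| ≤ C2 / (n * Real.sqrt n) := by
    refine le_trans ?_ K2
    refine le_trans (le_of_eq ?_) (Complex.abs_im_le_norm _)
    congr 1
    rw [Complex.sub_im]
    have hcg : Continuous fun t => Real.cos t / rD c t := by
      have := fun t => (rD_pos hs h1 t).ne'
      fun_prop (disch := assumption)
    have him : (∫ t in (-(Real.pi / 2))..(Real.pi / 2),
        Complex.exp (Complex.I * ((n * Real.arccos (c * Real.cos t) - y * t : ℝ) : ℂ)) * ((Real.cos t / rD c t : ℝ) : ℂ)).im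
          = Real.pi * intM c n y := by
      have := Complex.imCLM.intervalIntegral_comp_comm (a := -(Real.pi / 2)) (b := Real.pi / 2) (μ := volume)
        (f := fun t => Complex.exp (Complex.I * ((n * Real.arccos (c * Real.cos t) - y * t : ℝ) : ℂ)) * ((Real.cos t / rD c t : ℝ) : ℂ))
        (Continuous.intervalIntegrable (by fun_prop) _ _)
      simp only [Complex.imCLM_apply] at this
      rw [← this, intM, ← mul_assoc, mul_one_div_cancel hpi.ne', one_mul]
      refine intervalIntegral.integral_congr fun t _ => ?_
      rw [mul_comm Complex.I, Complex.im_mul_ofReal, Complex.exp_ofReal_mul_I_im]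
    rw [him, Complex.im_ofReal_mul, mul_comm Complex.I (β : ℂ), Complex.exp_ofReal_mul_I_im]
  obtain ⟨e1, he1, E1⟩ := scaled_error (by positivity) A1
  obtain ⟨e2, he2, E2⟩ := scaled_error (by positivity) A2
  refine ⟨e1, e2, ?_, ?_, ?_, ?_⟩
  · refine (he1.trans (herr _ hC1)).trans ?_
    gcongr; linarith
  · refine (he2.trans (herr _ hC2)).trans ?_
    gcongr; linarith
  · have := mul_left_cancel₀ hpi.ne' (E1.trans (mul_assoc _ _ _))
    rw [this, one_mul]
  · exact mul_left_cancel₀ hpi.ne' (E2.trans (mul_assoc _ _ _))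

/-! ### Fourier representation of the walk -/

/-- The mean over the period `[-π/2, 3π/2]`. -/
def avg (f : ℝ → ℝ) : ℝ := 1 / (2 * Real.pi) * ∫ t in (-(Real.pi / 2))..(3 * Real.pi / 2), f t

/-- The Fourier kernel `cos (n μ(t)) cos (y t)`. -/
def kerK (c : ℝ) (n : ℕ) (y : ℤ) (t : ℝ) : ℝ := Real.cos (n * Real.arccos (c * Real.cos t)) * Real.cos (y * t)

/-- The Fourier kernel `(sin (n μ(t)) / sin μ(t)) c sin t sin (y t)`. -/
def kerV (c : ℝ) (n : ℕ) (y : ℤ) (t : ℝ) : ℝ :=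
  Real.sin (n * Real.arccos (c * Real.cos t)) / rD c t * (c * Real.sin t) * Real.sin (y * t)

/-- The Fourier kernel `(sin (n μ(t)) / sin μ(t)) cos (y t)`. -/
def kerW (c : ℝ) (n : ℕ) (y : ℤ) (t : ℝ) : ℝ :=
  Real.sin (n * Real.arccos (c * Real.cos t)) / rD c t * Real.cos (y * t)

/-- The Fourier kernel `(sin (n μ(t)) / sin μ(t)) cos t cos (y t)`. -/
def kerM (c : ℝ) (n : ℕ) (y : ℤ) (t : ℝ) : ℝ :=
  Real.sin (n * Real.arccos (c * Real.cos t)) * Real.cos (y * t) * (Real.cos t / rD c t)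

section kernels
variable {c s : ℝ}

lemma avg_add {f g : ℝ → ℝ} (hf : Continuous f) (hg : Continuous g) :
    avg (fun t => f t + g t) = avg f + avg g := by
  rw [avg, intervalIntegral.integral_add (hf.intervalIntegrable _ _) (hg.intervalIntegrable _ _), mul_add]; rfl

lemma avg_mul (k : ℝ) (f : ℝ → ℝ) : avg (fun t => k * f t) = k * avg f := by
  rw [avg, intervalIntegral.integral_const_mul, avg]; ring

lemma cont_kerK (n : ℕ) (y : ℤ) : Continuous (kerK c n y) := by unfold kerK; fun_prop

lemma cont_kerV (hs : 0 < s) (h1 : c ^ 2 + s ^ 2 = 1) (n : ℕ) (y : ℤ) : Continuous (kerV c n y) := by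
  have := continuous_rD c
  have h := fun t => (rD_pos hs h1 t).ne'
  unfold kerV; fun_prop (disch := assumption)

lemma cont_kerW (hs : 0 < s) (h1 : c ^ 2 + s ^ 2 = 1) (n : ℕ) (y : ℤ) : Continuous (kerW c n y) := by
  have := continuous_rD c
  have h := fun t => (rD_pos hs h1 t).ne'
  unfold kerW; fun_prop (disch := assumption)

lemma cont_kerM (hs : 0 < s) (h1 : c ^ 2 + s ^ 2 = 1) (n : ℕ) (y : ℤ) : Continuous (kerM c n y) := by
  have := continuous_rD c
  have h := fun t => (rD_pos hs h1 t).ne'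
  unfold kerM; fun_prop (disch := assumption)

lemma cos_mu (hs : 0 < s) (h1 : c ^ 2 + s ^ 2 = 1) (t : ℝ) :
    Real.cos (Real.arccos (c * Real.cos t)) = c * Real.cos t := by
  have h := abs_lt.1 (abs_mul_cos_lt hs h1 t)
  exact Real.cos_arccos h.1.le h.2.le

lemma sin_mu (t : ℝ) : Real.sin (Real.arccos (c * Real.cos t)) = rD c t := by
  rw [Real.sin_arccos, rD, mul_pow]

/-- Together with the next three identities: the recursion in `n` satisfied by the kernels, which
matches one step of the walk. -/
lemma ker_succ_W (hs : 0 < s) (h1 : c ^ 2 + s ^ 2 = 1) (n : ℕ) (y : ℤ) (t : ℝ) :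
    kerW c (n + 1) y t = kerK c n y t + kerV c n y t + c * kerW c n (y + 1) t := by
  have hr := (rD_pos hs h1 t).ne'
  simp only [kerW, kerK, kerV]
  push_cast
  rw [add_one_mul, Real.sin_add, cos_mu hs h1, sin_mu, add_one_mul, Real.cos_add]
  field_simp
  ring

lemma ker_succ_W' (hs : 0 < s) (h1 : c ^ 2 + s ^ 2 = 1) (n : ℕ) (y : ℤ) (t : ℝ) :
    kerW c (n + 1) y t = kerK c n y t - kerV c n y t + c * kerW c n (y - 1) t := by
  have hr := (rD_pos hs h1 t).ne'
  simp only [kerW, kerK, kerV]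
  push_cast
  rw [add_one_mul, Real.sin_add, cos_mu hs h1, sin_mu, sub_one_mul, Real.cos_sub]
  field_simp
  ring

lemma ker_succ_sub (hs : 0 < s) (h1 : c ^ 2 + s ^ 2 = 1) (n : ℕ) (y : ℤ) (t : ℝ) :
    kerK c (n + 1) y t - kerV c (n + 1) y t
      = c * (kerK c n (y + 1) t - kerV c n (y + 1) t) - s ^ 2 * kerW c n y t := by
  have hr := (rD_pos hs h1 t).ne'
  simp only [kerW, kerK, kerV]
  push_cast
  rw [add_one_mul, Real.sin_add, Real.cos_add, cos_mu hs h1, sin_mu, add_one_mul, Real.cos_add, Real.sin_add]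
  field_simp
  have e := rD_sq hs h1 t
  have e2 : rD c t ^ 2 = s ^ 2 + c ^ 2 * Real.sin t ^ 2 := by
    rw [e]; linear_combination -h1 - c ^ 2 * Real.sin_sq_add_cos_sq t
  linear_combination (-Real.sin (n * Real.arccos (c * Real.cos t)) * Real.cos (y * t)) * e2

lemma ker_succ_add (hs : 0 < s) (h1 : c ^ 2 + s ^ 2 = 1) (n : ℕ) (y : ℤ) (t : ℝ) :
    kerK c (n + 1) y t + kerV c (n + 1) y t
      = c * (kerK c n (y - 1) t + kerV c n (y - 1) t) - s ^ 2 * kerW c n y t := by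
  have hr := (rD_pos hs h1 t).ne'
  simp only [kerW, kerK, kerV]
  push_cast
  rw [add_one_mul, Real.sin_add, Real.cos_add, cos_mu hs h1, sin_mu, sub_one_mul, Real.cos_sub, Real.sin_sub]
  field_simp
  have e := rD_sq hs h1 t
  have e2 : rD c t ^ 2 = s ^ 2 + c ^ 2 * Real.sin t ^ 2 := by
    rw [e]; linear_combination -h1 - c ^ 2 * Real.sin_sq_add_cos_sq t
  linear_combination (-Real.sin (n * Real.arccos (c * Real.cos t)) * Real.cos (y * t)) * e2

lemma avg_succ_W (hs : 0 < s) (h1 : c ^ 2 + s ^ 2 = 1) (n : ℕ) (y : ℤ) :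
    avg (kerW c (n + 1) y) = avg (kerK c n y) + avg (kerV c n y) + c * avg (kerW c n (y + 1)) := by
  rw [funext (ker_succ_W hs h1 n y), avg_add (f := fun t => kerK c n y t + kerV c n y t) ((cont_kerK n y).add (cont_kerV hs h1 n y))
    ((cont_kerW hs h1 n _).const_mul c), avg_add (cont_kerK n y) (cont_kerV hs h1 n y), avg_mul]

lemma avg_sub {f g : ℝ → ℝ} (hf : Continuous f) (hg : Continuous g) :
    avg (fun t => f t - g t) = avg f - avg g := by
  rw [avg, intervalIntegral.integral_sub (hf.intervalIntegrable _ _) (hg.intervalIntegrable _ _), mul_sub]; rfl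

lemma avg_succ_W' (hs : 0 < s) (h1 : c ^ 2 + s ^ 2 = 1) (n : ℕ) (y : ℤ) :
    avg (kerW c (n + 1) y) = avg (kerK c n y) - avg (kerV c n y) + c * avg (kerW c n (y - 1)) := by
  rw [funext (ker_succ_W' hs h1 n y), avg_add (f := fun t => kerK c n y t - kerV c n y t) ((cont_kerK n y).sub (cont_kerV hs h1 n y))
    ((cont_kerW hs h1 n _).const_mul c), avg_sub (cont_kerK n y) (cont_kerV hs h1 n y), avg_mul]

lemma avg_succ_sub (hs : 0 < s) (h1 : c ^ 2 + s ^ 2 = 1) (n : ℕ) (y : ℤ) :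
    avg (kerK c (n + 1) y) - avg (kerV c (n + 1) y)
      = c * (avg (kerK c n (y + 1)) - avg (kerV c n (y + 1))) - s ^ 2 * avg (kerW c n y) := by
  rw [← avg_sub (cont_kerK _ _) (cont_kerV hs h1 _ _), funext (ker_succ_sub hs h1 n y),
    avg_sub (f := fun t => c * (kerK c n (y + 1) t - kerV c n (y + 1) t)) (((cont_kerK n _).sub (cont_kerV hs h1 n _)).const_mul c) ((cont_kerW hs h1 n _).const_mul _),
    avg_mul, avg_mul, avg_sub (cont_kerK _ _) (cont_kerV hs h1 _ _)]

lemma avg_succ_add (hs : 0 < s) (h1 : c ^ 2 + s ^ 2 = 1) (n : ℕ) (y : ℤ) :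
    avg (kerK c (n + 1) y) + avg (kerV c (n + 1) y)
      = c * (avg (kerK c n (y - 1)) + avg (kerV c n (y - 1))) - s ^ 2 * avg (kerW c n y) := by
  rw [← avg_add (cont_kerK _ _) (cont_kerV hs h1 _ _), funext (ker_succ_add hs h1 n y),
    avg_sub (f := fun t => c * (kerK c n (y - 1) t + kerV c n (y - 1) t)) (((cont_kerK n _).add (cont_kerV hs h1 n _)).const_mul c) ((cont_kerW hs h1 n _).const_mul _),
    avg_mul, avg_mul, avg_add (cont_kerK _ _) (cont_kerV hs h1 _ _)]

lemma avg_W_pred (hc : 0 < c) (hs : 0 < s) (h1 : c ^ 2 + s ^ 2 = 1) (n : ℕ) (y : ℤ) :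
    avg (kerW c n (y - 1)) = avg (kerM c n y) + 1 / c * avg (kerV c n y) := by
  rw [← avg_mul, ← avg_add (cont_kerM hs h1 n y) ((cont_kerV hs h1 n y).const_mul _)]
  congr 1
  funext t
  simp only [kerW, kerM, kerV]
  have hr := (rD_pos hs h1 t).ne'
  push_cast
  rw [sub_one_mul, Real.cos_sub]
  field_simp

lemma avg_W_succ (hc : 0 < c) (hs : 0 < s) (h1 : c ^ 2 + s ^ 2 = 1) (n : ℕ) (y : ℤ) :
    avg (kerW c n (y + 1)) = avg (kerM c n y) - 1 / c * avg (kerV c n y) := by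
  rw [← avg_mul, ← avg_sub (cont_kerM hs h1 n y) ((cont_kerV hs h1 n y).const_mul _)]
  congr 1
  funext t
  simp only [kerW, kerM, kerV]
  have hr := (rD_pos hs h1 t).ne'
  push_cast
  rw [add_one_mul, Real.cos_add]
  field_simp

/-- Integration by parts: `cos (n μ) sin (y t)` takes the same value at both ends of a period. -/
lemma avg_V (hs : 0 < s) (h1 : c ^ 2 + s ^ 2 = 1) (n : ℕ) (y : ℤ) :
    n * avg (kerV c n y) = y * avg (kerK c n y) := by
  have hd : ∀ t, HasDerivAt (fun t => Real.cos (n * Real.arccos (c * Real.cos t)) * Real.sin (y * t))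
      (y * kerK c n y t - n * kerV c n y t) t := by
    intro t
    have e1 := ((hasDerivAt_mu hs h1 t).const_mul (n : ℝ)).cos
    have e2 := ((hasDerivAt_id t).const_mul (y : ℝ)).sin
    refine (e1.mul e2).congr_deriv ?_
    simp only [kerK, kerV, id]
    ring
  have hI := intervalIntegral.integral_eq_sub_of_hasDerivAt (a := -(Real.pi / 2)) (b := 3 * Real.pi / 2)
    (fun t _ => hd t) (Continuous.intervalIntegrable
      (((cont_kerK n y).const_mul _).sub ((cont_kerV hs h1 n y).const_mul _)) _ _)
  have ha : avg (fun t => y * kerK c n y t - n * kerV c n y t) = 0 := by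
    rw [avg, hI]
    have p1 : (y : ℝ) * (3 * Real.pi / 2) = y * -(Real.pi / 2) + y * (2 * Real.pi) := by ring
    have p2 : Real.cos (3 * Real.pi / 2) = Real.cos (-(Real.pi / 2)) := by
      rw [show 3 * Real.pi / 2 = -(Real.pi / 2) + 2 * Real.pi by ring, Real.cos_add_two_pi]
    rw [p1, p2, Real.sin_add_int_mul_two_pi, sub_self, mul_zero]
  rw [avg_sub ((cont_kerK n y).const_mul _) ((cont_kerV hs h1 n y).const_mul _), avg_mul, avg_mul] at ha
  linarith

lemma avg_W_zero (y : ℤ) : avg (kerW c 0 y) = 0 := by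
  simp [avg, kerW]

lemma avg_V_zero (y : ℤ) : avg (kerV c 0 y) = 0 := by
  simp [avg, kerV]

lemma avg_K_zero (y : ℤ) : avg (kerK c 0 y) = if y = 0 then 1 else 0 := by
  have hpi := Real.pi_pos
  split_ifs with h
  · subst h
    simp [avg, kerK]
    field_simp
    ring
  · have hy : (y : ℝ) ≠ 0 := by exact_mod_cast h
    simp only [avg, kerK, Nat.cast_zero, zero_mul, Real.cos_zero, one_mul]
    rw [intervalIntegral.integral_comp_mul_left (fun t => Real.cos t) hy, integral_cos]
    have p1 : (y : ℝ) * (3 * Real.pi / 2) = y * -(Real.pi / 2) + y * (2 * Real.pi) := by ring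
    rw [p1, Real.sin_add_int_mul_two_pi, sub_self, smul_zero, mul_zero]

/-- Splitting the period in two halves that differ by the sign `(-1)^(n+y)`. -/
lemma avg_parity {f : ℝ → ℝ} (hf : Continuous f) (ε : ℝ) (h : ∀ t, f (t + Real.pi) = ε * f t) :
    avg f = (1 + ε) / 2 * (1 / Real.pi * ∫ t in (-(Real.pi / 2))..(Real.pi / 2), f t) := by
  have h2 : (∫ t in (Real.pi / 2)..(3 * Real.pi / 2), f t) = ε * ∫ t in (-(Real.pi / 2))..(Real.pi / 2), f t := by
    rw [← intervalIntegral.integral_const_mul]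
    have := intervalIntegral.integral_comp_add_right (a := -(Real.pi / 2)) (b := Real.pi / 2) f Real.pi
    simp only [h] at this
    rw [this]
    congr 1 <;> ring
  rw [avg, ← intervalIntegral.integral_add_adjacent_intervals (hf.intervalIntegrable _ (Real.pi / 2))
    (hf.intervalIntegrable _ _), h2]
  field_simp

lemma mu_add_pi (t : ℝ) : Real.arccos (c * Real.cos (t + Real.pi)) = Real.pi - Real.arccos (c * Real.cos t) := by
  rw [Real.cos_add_pi, mul_neg, Real.arccos_neg]

lemma rD_add_pi (t : ℝ) : rD c (t + Real.pi) = rD c t := by simp [rD, Real.cos_add_pi]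

lemma kerK_add_pi (n : ℕ) (y : ℤ) (t : ℝ) : kerK c n y (t + Real.pi) = (-1) ^ ((n : ℤ) + y) * kerK c n y t := by
  simp only [kerK]
  rw [mu_add_pi, mul_sub, mul_add, Real.cos_nat_mul_pi_sub, Real.cos_add_int_mul_pi, zpow_add₀ (by norm_num), zpow_natCast]
  ring

lemma kerM_add_pi (n : ℕ) (y : ℤ) (t : ℝ) : kerM c n y (t + Real.pi) = (-1) ^ ((n : ℤ) + y) * kerM c n y t := by
  simp only [kerM]
  rw [mu_add_pi, mul_sub, mul_add, Real.sin_nat_mul_pi_sub, Real.cos_add_int_mul_pi, zpow_add₀ (by norm_num), zpow_natCast,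
    rD_add_pi, Real.cos_add_pi]
  ring

lemma integral_odd {f : ℝ → ℝ} (h : ∀ t, f (-t) = -f t) (L : ℝ) : ∫ t in (-L)..L, f t = 0 := by
  have := intervalIntegral.integral_comp_neg (a := -L) (b := L) f
  simp only [h, neg_neg, intervalIntegral.integral_neg] at this
  linarith

lemma avg_K_eq (n : ℕ) (y : ℤ) : avg (kerK c n y) = (1 + (-1) ^ ((n : ℤ) + y)) / 2 * intK c n y := by
  rw [avg_parity (cont_kerK n y) _ (kerK_add_pi n y), intK]
  congr 2
  have h0 : ∫ t in (-(Real.pi / 2))..(Real.pi / 2),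
      Real.sin (n * Real.arccos (c * Real.cos t)) * Real.sin (y * t) = 0 :=
    integral_odd (fun t => by simp) _
  rw [← add_zero (∫ t in _.._, kerK c n y t), ← h0, ← intervalIntegral.integral_add
    ((cont_kerK n y).intervalIntegrable _ _) (Continuous.intervalIntegrable (by fun_prop) _ _)]
  refine intervalIntegral.integral_congr fun t _ => ?_
  simp only [kerK, Real.cos_sub]

lemma avg_M_eq (hs : 0 < s) (h1 : c ^ 2 + s ^ 2 = 1) (n : ℕ) (y : ℤ) :
    avg (kerM c n y) = (1 + (-1) ^ ((n : ℤ) + y)) / 2 * intM c n y := by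
  rw [avg_parity (cont_kerM hs h1 n y) _ (kerM_add_pi n y), intM]
  congr 2
  have h0 : ∫ t in (-(Real.pi / 2))..(Real.pi / 2),
      Real.cos (n * Real.arccos (c * Real.cos t)) * Real.sin (y * t) * (Real.cos t / rD c t) = 0 :=
    integral_odd (fun t => by simp [rD_neg]) _
  have := continuous_rD c
  have h := fun t => (rD_pos hs h1 t).ne'
  rw [← sub_zero (∫ t in _.._, kerM c n y t), ← h0, ← intervalIntegral.integral_sub
    ((cont_kerM hs h1 n y).intervalIntegrable _ _)
    (Continuous.intervalIntegrable (by fun_prop (disch := assumption)) _ _)]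
  refine intervalIntegral.integral_congr fun t _ => ?_
  simp only [kerM, Real.sin_sub]
  ring

end kernels

/-- Closed form of the iterates of the walk in terms of the averaged kernels, with `u = a / |a|`. -/
lemma qw_iterate (a b : ℂ) (ha : a ≠ 0) (hb : b ≠ 0) (h1 : ‖a‖ ^ 2 + ‖b‖ ^ 2 = 1) (φ : ℂ × ℂ) (u : ℂ)
    (hu : u = a / ‖a‖) (n : ℕ) : ∀ y : ℤ,
    (qwStep a b)^[n] (qwDelta φ) y =
      (u ^ (-y) * (((avg (kerK ‖a‖ n y) - avg (kerV ‖a‖ n y) : ℝ) : ℂ) * φ.1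
        + b * u * (avg (kerW ‖a‖ n (y - 1)) : ℝ) * φ.2),
       u ^ (-y) * (-(starRingEnd ℂ) (b * u) * (avg (kerW ‖a‖ n (y + 1)) : ℝ) * φ.1
        + ((avg (kerK ‖a‖ n y) + avg (kerV ‖a‖ n y) : ℝ) : ℂ) * φ.2)) := by
  have hs : 0 < ‖b‖ := norm_pos_iff.2 hb
  have hc : 0 < ‖a‖ := norm_pos_iff.2 ha
  have hcC : (‖a‖ : ℂ) ≠ 0 := by exact_mod_cast hc.ne'
  have hu0 : u ≠ 0 := by rw [hu]; exact div_ne_zero ha hcC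
  have hau : a = ‖a‖ * u := by rw [hu]; field_simp
  have huu : (starRingEnd ℂ) u * u = 1 := by
    rw [mul_comm, Complex.mul_conj, Complex.normSq_eq_norm_sq, hu, norm_div]
    simp [hc.ne']
  have hbb : b * (starRingEnd ℂ) b = (‖b‖ ^ 2 : ℝ) := by rw [Complex.mul_conj, Complex.normSq_eq_norm_sq]
  induction n with
  | zero =>
    intro y
    simp only [Function.iterate_zero, id, avg_W_zero, avg_V_zero, avg_K_zero, qwDelta]
    split_ifs with h
    · subst h; simp
    · simp [Prod.ext_iff]
  | succ n ih =>
    intro y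
    rw [Function.iterate_succ_apply']
    have z1 : u ^ (-(y + 1)) = u ^ (-y) * (starRingEnd ℂ) u := by
      rw [neg_add, zpow_add₀ hu0, zpow_neg_one]
      congr 1
      exact (eq_inv_of_mul_eq_one_left huu).symm
    have z2 : u ^ (-(y - 1)) = u ^ (-y) * u := by
      rw [neg_sub, sub_eq_add_neg, add_comm, zpow_add₀ hu0, zpow_one]
    have hca : (starRingEnd ℂ) a = ‖a‖ * (starRingEnd ℂ) u := by
      nth_rewrite 1 [hau]; simp
    simp only [qwStep, ih (y + 1), ih (y - 1), sub_add_cancel, add_sub_cancel_right, z1, z2]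
    rw [avg_succ_sub hs h1, avg_succ_add hs h1]
    rw [avg_succ_W hs h1 n (y - 1), avg_succ_W' hs h1 n (y + 1)]
    simp only [sub_add_cancel, add_sub_cancel_right, map_mul]
    rw [hca]
    push_cast at hbb ⊢
    set uc := (starRingEnd ℂ) u
    set bc := (starRingEnd ℂ) b
    have hau' : a * uc = ‖a‖ := by rw [hau, mul_assoc, mul_comm u, huu, mul_one, norm_mul]; simp [hu, hc.ne']
    generalize u ^ (-y) = p
    generalize (avg (kerK ‖a‖ n (y + 1)) : ℂ) = k1
    generalize (avg (kerV ‖a‖ n (y + 1)) : ℂ) = v1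
    generalize (avg (kerK ‖a‖ n (y - 1)) : ℂ) = k2
    generalize (avg (kerV ‖a‖ n (y - 1)) : ℂ) = v2
    generalize (avg (kerW ‖a‖ n y) : ℂ) = w
    refine Prod.ext ?_ ?_
    · linear_combination p * ((k1 - v1) * φ.1 + b * u * w * φ.2) * hau'
        - p * w * φ.1 * (u * uc) * hbb - p * w * φ.1 * (‖b‖ : ℂ) ^ 2 * huu
    · linear_combination p * ‖a‖ * (-(bc * uc) * w * φ.1 + (k2 + v2) * φ.2) * huu
        - p * w * φ.2 * (u * uc) * hbb - p * w * φ.2 * (‖b‖ : ℂ) ^ 2 * huu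

/-! ### The transition probability -/

lemma norm_sq_lin (X Y : ℝ) (z w : ℂ) :
    ‖(X : ℂ) * z + (Y : ℂ) * w‖ ^ 2 =
      X ^ 2 * ‖z‖ ^ 2 + Y ^ 2 * ‖w‖ ^ 2 + 2 * X * Y * ((starRingEnd ℂ) z * w).re := by
  simp only [Complex.sq_norm, Complex.normSq_apply, Complex.add_re, Complex.add_im, Complex.mul_re,
    Complex.mul_im, Complex.ofReal_re, Complex.ofReal_im, Complex.conj_re, Complex.conj_im]
  ring

/-- The transition probability as a quadratic form in the two averaged kernels; `R` is the
interference term `Re (a b conj φ₁ φ₂) / |a|`. -/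
lemma qwP_formula (a b : ℂ) (ha : a ≠ 0) (hb : b ≠ 0) (h1 : ‖a‖ ^ 2 + ‖b‖ ^ 2 = 1) (φ : ℂ × ℂ)
    (hφ : nsq φ = 1) (n : ℕ) (hn : 0 < n) (y : ℤ) (ξ K M R : ℝ) (hξ : ξ = (y : ℝ) / n)
    (hK : K = avg (kerK ‖a‖ n y)) (hM : M = avg (kerM ‖a‖ n y))
    (hR : R = (a * b * (starRingEnd ℂ) φ.1 * φ.2).re / ‖a‖) :
    qwP a b φ n y = K ^ 2 * (1 + ξ ^ 2 / ‖a‖ ^ 2 + 2 * ξ * lamA a b φ) + ‖b‖ ^ 2 * M ^ 2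
      + K * M * (2 * ‖b‖ ^ 2 * ξ * (‖φ.2‖ ^ 2 - ‖φ.1‖ ^ 2) / ‖a‖ - 4 * R * ξ) := by
  have hs : 0 < ‖b‖ := norm_pos_iff.2 hb
  have hc : 0 < ‖a‖ := norm_pos_iff.2 ha
  have hcC : (‖a‖ : ℂ) ≠ 0 := by exact_mod_cast hc.ne'
  have hn0 : (0 : ℝ) < n := by exact_mod_cast hn
  have hV : avg (kerV ‖a‖ n y) = ξ * K := by
    have := avg_V hs h1 n y
    rw [hξ, hK]
    field_simp
    linarith
  rw [qwP, qw_iterate a b ha hb h1 φ _ rfl n y, avg_W_pred hc hs h1, avg_W_succ hc hs h1, hV, ← hK, ← hM]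
  set u := a / (‖a‖ : ℂ) with hu
  have hun : ‖u‖ = 1 := by rw [hu, norm_div]; simp [hc.ne']
  have hun2 : ‖u ^ (-y)‖ = 1 := by rw [norm_zpow, hun, one_zpow]
  rw [nsq, norm_mul, norm_mul, hun2, one_mul, one_mul]
  have i1 : ∀ w : ℝ, b * u * (w : ℂ) * φ.2 = (w : ℂ) * (b * u * φ.2) := fun w => by ring
  have i2 : ∀ w : ℝ, -(starRingEnd ℂ) (b * u) * (w : ℂ) * φ.1 = (w : ℂ) * (-((starRingEnd ℂ) (b * u) * φ.1)) :=
    fun w => by ring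
  rw [i1, i2, norm_sq_lin, norm_sq_lin]
  have n1 : ‖b * u * φ.2‖ ^ 2 = ‖b‖ ^ 2 * ‖φ.2‖ ^ 2 := by rw [norm_mul, norm_mul, hun]; ring
  have n2 : ‖-((starRingEnd ℂ) (b * u) * φ.1)‖ ^ 2 = ‖b‖ ^ 2 * ‖φ.1‖ ^ 2 := by
    rw [norm_neg, norm_mul, RCLike.norm_conj, norm_mul, hun]; ring
  have r1 : ((starRingEnd ℂ) φ.1 * (b * u * φ.2)).re = R := by
    rw [hR, ← Complex.div_ofReal_re]
    congr 1
    rw [hu]; ring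
  have r2 : ((starRingEnd ℂ) (-((starRingEnd ℂ) (b * u) * φ.1)) * φ.2).re = -R := by
    rw [← r1, map_neg, map_mul, Complex.conj_conj, neg_mul, Complex.neg_re]
    congr 2
    ring
  have hl : lamA a b φ = ‖φ.2‖ ^ 2 - ‖φ.1‖ ^ 2 + 2 * R / ‖a‖ := by
    have e : (starRingEnd ℂ) a * (starRingEnd ℂ) b * φ.1 * (starRingEnd ℂ) φ.2
        = (starRingEnd ℂ) (a * b * (starRingEnd ℂ) φ.1 * φ.2) := by simp
    rw [lamA, e, Complex.add_re, Complex.conj_re, hR]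
    field_simp
    ring
  rw [n1, n2, r1, r2, hl]
  have hφ' : ‖φ.2‖ ^ 2 = 1 - ‖φ.1‖ ^ 2 := by rw [nsq] at hφ; linarith
  have hb2 : ‖b‖ ^ 2 = 1 - ‖a‖ ^ 2 := by linarith
  rw [hφ', hb2]
  field_simp
  ring

lemma le_one_of_sq {c s : ℝ} (h1 : c ^ 2 + s ^ 2 = 1) : c ≤ 1 := by
  nlinarith [sq_nonneg s, sq_nonneg (c - 1)]

/-- Bound for the part of the quadratic form that involves the errors `e1`, `e2` of the two integrals. -/
lemma final_error {c s C N ξ l L κ e1 e2 co si : ℝ} (hc : 0 < c) (hs : 0 < s) (hs1 : s ≤ 1)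
    (hC : 0 < C) (hN : 1 ≤ N) (hξc : ξ ^ 2 ≤ c ^ 2) (hξ1 : |ξ| ≤ 1) (hκ : |κ| ≤ 1 / s)
    (h1 : |e1| ≤ C / N) (h2 : |e2| ≤ C / N) (hco : |co| ≤ 1) (hsi : |si| ≤ 1) :
    |e1 * (2 * co + e1) * (1 + ξ ^ 2 / c ^ 2 + 2 * ξ * l) + s ^ 2 * (e2 * (2 * (κ * si) + e2))
      + (e1 * (κ * si) + e2 * (co + e1)) * L| ≤
      C * ((2 + C) * (2 + 2 * |l|) + (2 / s + C) + (1 / s + (1 + C)) * |L|) / N := by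
  have hN0 : 0 < N := by linarith
  have hCN : C / N ≤ C := div_le_self hC.le hN
  have hCN0 : 0 ≤ C / N := by positivity
  have a1 : |2 * co + e1| ≤ 2 + C := by
    refine (abs_add_le _ _).trans ?_
    rw [abs_mul, abs_two]; linarith
  have a2 : |1 + ξ ^ 2 / c ^ 2 + 2 * ξ * l| ≤ 2 + 2 * |l| := by
    refine (abs_add_le _ _).trans ?_
    have t1 : |1 + ξ ^ 2 / c ^ 2| ≤ 2 := by
      rw [abs_of_nonneg (by positivity)]
      have := (div_le_one (by positivity : 0 < c ^ 2)).2 hξc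
      linarith
    have t2 : |2 * ξ * l| ≤ 2 * |l| := by
      rw [abs_mul, abs_mul, abs_two]
      have := mul_le_mul_of_nonneg_right hξ1 (abs_nonneg l)
      linarith
    linarith
  have ks : |κ * si| ≤ 1 / s := by
    rw [abs_mul]
    calc |κ| * |si| ≤ 1 / s * 1 := mul_le_mul hκ hsi (abs_nonneg _) (by positivity)
      _ = 1 / s := mul_one _
  have a3 : |2 * (κ * si) + e2| ≤ 2 / s + C := by
    refine (abs_add_le _ _).trans ?_
    rw [abs_mul, abs_two]
    have : 2 / s = 2 * (1 / s) := by ring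
    linarith
  have a4 : |co + e1| ≤ 1 + C := (abs_add_le _ _).trans (by linarith)
  have b1 : |e1 * (2 * co + e1) * (1 + ξ ^ 2 / c ^ 2 + 2 * ξ * l)| ≤ C / N * (2 + C) * (2 + 2 * |l|) := by
    rw [abs_mul, abs_mul]
    gcongr
  have b2 : |s ^ 2 * (e2 * (2 * (κ * si) + e2))| ≤ 1 * (C / N * (2 / s + C)) := by
    rw [abs_mul, abs_mul, abs_of_nonneg (sq_nonneg s)]
    have : s ^ 2 ≤ 1 := pow_le_one₀ hs.le hs1
    gcongr
  have b3 : |(e1 * (κ * si) + e2 * (co + e1)) * L| ≤ (C / N * (1 / s) + C / N * (1 + C)) * |L| := by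
    rw [abs_mul]
    refine mul_le_mul_of_nonneg_right ?_ (abs_nonneg _)
    refine (abs_add_le _ _).trans ?_
    rw [abs_mul, abs_mul e2]
    gcongr
  refine (abs_add_le _ _).trans ((add_le_add ((abs_add_le _ _).trans (add_le_add b1 b2)) b3).trans (le_of_eq ?_))
  ring

/-- Theorem `inner` of Sunada–Tate: asymptotics of `p_n(φ;y)` in the
allowed region `|y/n| ≤ α < |a|`, with an explicit oscillating term and a uniform `O(1/n)`
error. -/
theorem stmt0 (a b : ℂ) (hab1 : ‖a‖ ^ 2 + ‖b‖ ^ 2 = 1) (hab : a * b ≠ 0)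
    (φ : ℂ × ℂ) (hφ : nsq φ = 1) (α : ℝ) (hα0 : 0 < α) (hαa : α < ‖a‖) :
    ∃ A₀ B₀ : ℝ → ℝ,
      ContinuousOn A₀ (Set.Ioo (-‖a‖) ‖a‖) ∧ ContinuousOn B₀ (Set.Ioo (-‖a‖) ‖a‖) ∧
      ∃ C : ℝ, 0 < C ∧
        ∀ n : ℕ, 0 < n → ∀ y : ℤ, ∀ ξ : ℝ, ξ = (y : ℝ) / (n : ℝ) → |ξ| ≤ α →
          ∃ E : ℝ, |E| ≤ C / (n : ℝ) ∧
            qwP a b φ n y =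
              (1 + (-1 : ℝ) ^ ((n : ℤ) + y)) * ‖b‖ /
                  (Real.pi * (n : ℝ) * (1 - ξ ^ 2) * Real.sqrt (‖a‖ ^ 2 - ξ ^ 2)) *
                (1 + lamA a b φ * ξ + A₀ ξ * Real.cos ((n : ℝ) * thetaF a b ξ)
                  + B₀ ξ * Real.sin ((n : ℝ) * thetaF a b ξ) + E) := by
  have ha : a ≠ 0 := left_ne_zero_of_mul hab
  have hb : b ≠ 0 := right_ne_zero_of_mul hab
  have hc : 0 < ‖a‖ := norm_pos_iff.2 ha
  have hs : 0 < ‖b‖ := norm_pos_iff.2 hb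
  set R : ℝ := (a * b * (starRingEnd ℂ) φ.1 * φ.2).re / ‖a‖ with hR
  set J : ℝ := 2 * ‖b‖ ^ 2 * (‖φ.2‖ ^ 2 - ‖φ.1‖ ^ 2) / ‖a‖ - 4 * R with hJ
  set l : ℝ := lamA a b φ with hl
  refine ⟨fun ξ => 1 / 2 * (Real.sqrt (‖a‖ ^ 2 - ξ ^ 2) / (‖a‖ * ‖b‖)) * (J * ξ),
    fun ξ => -(ξ ^ 2 / ‖a‖ ^ 2 + l * ξ), Continuous.continuousOn (by fun_prop),
    Continuous.continuousOn (by fun_prop), ?_⟩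
  obtain ⟨C, hC, H⟩ := KM_asymp hc hs hab1 hα0 hαa
  refine ⟨C * ((2 + C) * (2 + 2 * |l|) + (2 / ‖b‖ + C) + (1 / ‖b‖ + (1 + C)) * |J|), by positivity, ?_⟩
  intro n hn y ξ hξ hξα
  have hn1 : (1 : ℝ) ≤ n := by exact_mod_cast hn
  have hP := qwP_formula a b ha hb hab1 φ hφ n hn y ξ _ _ R hξ rfl rfl hR
  rw [avg_K_eq, avg_M_eq hs hab1] at hP
  rcases Int.even_or_odd ((n : ℤ) + y) with he | ho
  · obtain ⟨e1, e2, he1, he2, hK, hM⟩ := H n hn y ξ hξ hξα he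
    rw [he.neg_one_zpow] at hP ⊢
    have hξc : |ξ| < ‖a‖ := hξα.trans_lt hαa
    have hξ2 := sq_lt_of_abs hξc
    have hp : 0 < 1 - ξ ^ 2 := by linarith [pow_pos hs 2]
    have hq := Real.sqrt_pos.2 (sub_pos.2 hξ2)
    have hqq := Real.sq_sqrt (sub_pos.2 hξ2).le
    set z := Real.sqrt (‖a‖ ^ 2 - ξ ^ 2) with hz
    set β := (n * (Real.arccos (‖a‖ * Real.cos (Real.arcsin (sig ‖a‖ ‖b‖ ξ))) - ξ * Real.arcsin (sig ‖a‖ ‖b‖ ξ))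
          + Real.pi / 4) with hβ
    have hθ : (n : ℝ) * thetaF a b ξ = 2 * β - Real.pi / 2 := by
      rw [hβ]
      change (n : ℝ) * (2 * Real.arccos (‖a‖ * Real.cos (Real.arcsin (sig ‖a‖ ‖b‖ ξ)))
        - 2 * ξ * Real.arcsin (sig ‖a‖ ‖b‖ ξ)) = _
      ring
    have hsin : Real.sin ((n : ℝ) * thetaF a b ξ) = 1 - 2 * Real.cos β ^ 2 := by
      rw [hθ, Real.sin_sub_pi_div_two, Real.cos_two_mul]; ring
    have hcos : Real.cos ((n : ℝ) * thetaF a b ξ) = 2 * Real.sin β * Real.cos β := by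
      rw [hθ, Real.cos_sub_pi_div_two, Real.sin_two_mul]
    have hs1 : ‖b‖ ≤ 1 := le_one_of_sq (s := ‖a‖) (by rw [add_comm]; exact hab1)
    have hξ1 : |ξ| ≤ 1 := hξc.le.trans (le_one_of_sq hab1)
    have hκ : |z / (‖a‖ * ‖b‖)| ≤ 1 / ‖b‖ := by
      rw [abs_of_nonneg (by positivity), div_le_div_iff₀ (by positivity) hs, one_mul]
      refine mul_le_mul_of_nonneg_right ?_ hs.le
      rw [hz]
      exact Real.sqrt_le_iff.2 ⟨hc.le, sub_le_self _ (sq_nonneg ξ)⟩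
    have hE := final_error (L := J * ξ) (l := l) hc hs hs1 hC hn1 hξ2.le hξ1 hκ he1 he2 (Real.abs_cos_le_one β)
      (Real.abs_sin_le_one β)
    refine ⟨_, hE.trans ?_, ?_⟩
    · have : |J * ξ| ≤ |J| := by
        rw [abs_mul]; exact mul_le_of_le_one_right (abs_nonneg _) hξ1
      gcongr
    · rw [hP, hK, hM, hsin, hcos]
      have hpi := Real.pi_pos
      have hQ : 0 ≤ 2 * ‖b‖ / (Real.pi * n * (1 - ξ ^ 2) * z) := by positivity
      have hQ2 := Real.sq_sqrt hQ
      rw [show (1 + (1:ℝ)) * ‖b‖ = 2 * ‖b‖ by ring]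
      generalize Real.sqrt (2 * ‖b‖ / (Real.pi * n * (1 - ξ ^ 2) * z)) = P at hQ2 ⊢
      rw [← hQ2]
      have hk2 : ‖b‖ ^ 2 * (z / (‖a‖ * ‖b‖)) ^ 2 = 1 - ξ ^ 2 / ‖a‖ ^ 2 := by
        rw [div_pow, hqq]; field_simp
      have hJξ : 2 * ‖b‖ ^ 2 * ξ * (‖φ.2‖ ^ 2 - ‖φ.1‖ ^ 2) / ‖a‖ - 4 * R * ξ = J * ξ := by rw [hJ]; ring
      rw [hJξ]
      have htrig := Real.sin_sq_add_cos_sq β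
      linear_combination P ^ 2 * Real.sin β ^ 2 * hk2 + P ^ 2 * (1 - ξ ^ 2 / ‖a‖ ^ 2) * htrig
  · refine ⟨0, by rw [abs_zero]; positivity, ?_⟩
    rw [ho.neg_one_zpow] at hP ⊢
    rw [hP]
    ring
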